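/- arXiv:1409.3473 — 2 statements merged into one kernel-verified Lean document; each statement's English description precedes it below -/
import Mathlib

section
/- Let (A, 𝔪) be a d-dimensional complete equidimensional reduced Noetherian local ring of prime characteristic p and let I ⊆ A be an 𝔪-primary ideal. Then (1/d!)·e(I) ≤ e_HK(I) ≤ e(I). Moreover, if d ≥ 2, then the left inequality is strict: (1/d!)·e(I) < e_HK(I). -/
open IsLocalRing Filter Topology
open scoped TensorProduct

/-- The Frobenius bracket power `I^{[q]}`: the ideal generated by `q`-th powers of elements of `I`. -/
def Ideal.bracketPow {R : Type*} [CommRing R] (I : Ideal R) (q : ℕ) : Ideal R :=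
  Ideal.span ((fun a => a ^ q) '' (I : Set R))

/-- `R°`: the set of elements of `R` not contained in any minimal prime ideal. -/
def ringCirc (R : Type*) [CommRing R] : Set R :=
  {c | ∀ P ∈ minimalPrimes R, c ∉ P}

/-- The tight closure of an ideal `I` in a ring of characteristic `p`:
`x ∈ I^*` iff there is `c ∈ R°` with `c * x ^ (p ^ e) ∈ I^{[p^e]}` for all sufficiently
large `e`. -/
def tightClosure {R : Type*} [CommRing R] (p : ℕ) (I : Ideal R) : Set R :=
  {x | ∃ c ∈ ringCirc R, ∃ N : ℕ, ∀ e : ℕ, N ≤ e → c * x ^ p ^ e ∈ I.bracketPow (p ^ e)}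

/-- `x` is integral over the ideal `J`: there are `n ≥ 1` and `aᵢ ∈ Jⁱ` with
`x ^ n + a₁ x ^ (n-1) + ⋯ + aₙ = 0`. -/
def IsIntegralOverIdeal {R : Type*} [CommRing R] (J : Ideal R) (x : R) : Prop :=
  ∃ n : ℕ, 0 < n ∧ ∃ a : ℕ → R, (∀ i ∈ Finset.Icc 1 n, a i ∈ J ^ i) ∧
    x ^ n + ∑ i ∈ Finset.Icc 1 n, a i * x ^ (n - i) = 0

/-- `R` is F-finite: `F_*R` is a finitely generated `R`-module, i.e. there is a finite set
of generators `s` such that every element of `R` is an `R`-linear combination of elements of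
`s` with respect to the Frobenius-twisted action `r • b = r ^ p * b`. -/
def FFinite (R : Type*) [CommRing R] (p : ℕ) : Prop :=
  ∃ s : Finset R, ∀ x : R, ∃ a : R → R, x = ∑ b ∈ s, a b ^ p * b

/-- The map `cF^e : R → F^e_* R`, `x ↦ c * x ^ (p ^ e)`, splits as an `R`-module
homomorphism: there is an additive `φ : R → R` with `φ (r ^ (p ^ e) * x) = r * φ x`
for all `r, x` and `φ c = 1`. -/
def FrobSplitsWith {R : Type*} [CommRing R] (p : ℕ) (c : R) (e : ℕ) : Prop :=
  ∃ φ : R →+ R, (∀ r x : R, φ (r ^ p ^ e * x) = r * φ x) ∧ φ c = 1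

/-- `R` is strongly F-regular: F-finite, reduced, and for every `c ∈ R°` some `cF^e` splits. -/
def StronglyFRegular (R : Type*) [CommRing R] (p : ℕ) : Prop :=
  FFinite R p ∧ IsReduced R ∧ ∀ c ∈ ringCirc R, ∃ e : ℕ, FrobSplitsWith p c e

/-- `R` is F-pure: the Frobenius map `R → F_* R` splits as an `R`-module homomorphism. -/
def FPure (R : Type*) [CommRing R] (p : ℕ) : Prop :=
  ∃ φ : R →+ R, (∀ r x : R, φ (r ^ p * x) = r * φ x) ∧ φ 1 = 1

/-- A regular local ring: a Noetherian local ring whose maximal ideal can be generated by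
`dim R` elements. -/
def IsRegularLocal (R : Type*) [CommRing R] [IsLocalRing R] : Prop :=
  IsNoetherianRing R ∧ ∃ (d : ℕ) (x : Fin d → R),
    ringKrullDim R = d ∧ IsLocalRing.maximalIdeal R = Ideal.span (Set.range x)

/-- The height of an ideal: the infimum of the heights of the primes containing it. -/
noncomputable def idealHeight {R : Type*} [CommRing R] (I : Ideal R) : ℕ∞ :=
  ⨅ (P : PrimeSpectrum R) (_ : I ≤ P.asIdeal), Order.height P

/-- A parameter ideal: an ideal generated by `ht I` elements. -/
def IsParameterIdeal {R : Type*} [CommRing R] (I : Ideal R) : Prop :=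
  ∃ n : ℕ, idealHeight I = n ∧ ∃ x : Fin n → R, I = Ideal.span (Set.range x)

/-- A local ring is F-rational if every parameter ideal is tightly closed. -/
def FRationalLocal (R : Type*) [CommRing R] [IsLocalRing R] (p : ℕ) : Prop :=
  ∀ I : Ideal R, IsParameterIdeal I → tightClosure p I = ↑I

/-- A Cohen–Macaulay local ring: every full system of parameters `x₁, …, x_d`
(`d = dim B`) is a regular sequence, i.e. `(x₁, …, xᵢ) : xᵢ₊₁ = (x₁, …, xᵢ)`. -/
def IsCohenMacaulayLocalRing (B : Type*) [CommRing B] [IsLocalRing B] : Prop :=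
  ∀ d : ℕ, ringKrullDim B = d →
    ∀ x : Fin d → B, (∀ i, x i ∈ IsLocalRing.maximalIdeal B) →
      (Ideal.span (Set.range x)).radical = IsLocalRing.maximalIdeal B →
      ∀ i : Fin d,
        Submodule.colon (Ideal.span (x '' {j | (j : ℕ) < (i : ℕ)})) (Ideal.span {x i}) =
          Ideal.span (x '' {j | (j : ℕ) < (i : ℕ)})

/-- The length `ℓ_R M` of a module, as an extended natural number: the supremum of the
lengths of chains of submodules below `⊤`. -/
noncomputable def moduleLength (R M : Type*) [Ring R] [AddCommGroup M] [Module R M] : ℕ∞ :=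
  Order.height (⊤ : Submodule R M)

/-- The Frobenius endomorphism `x ↦ x ^ p`, as a ring homomorphism, in prime
characteristic `p`. -/
noncomputable def frobeniusRingHom (R : Type*) [CommRing R] (p : ℕ) [Fact p.Prime] [CharP R p] :
    R →+* R :=
  frobenius R p

/-!
Write `q = p ^ e`. The inclusion `I^{[q]} ⊆ I ^ q` gives `e(I) / d! ≤ e_HK(I)`. If `I` has `r`
generators, then adjoining their `q`-th powers one by one to `I ^ (q + s)` gives
`ℓ(A ⧸ I ^ (q + s)) ≤ ℓ(A ⧸ I^{[q]}) + r ℓ(A ⧸ I ^ s)`. With `q = P s` this becomes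
`E (P + 1) ^ d ≤ H P ^ d + r E` for `E = e(I) / d!` and `H = e_HK(I)`, which forces `E < H` as soon
as `d ≥ 2` and `P > r`, because `E > 0`. Positivity is seen by climbing down a chain of primes of
length `d`, using the Artin–Rees lemma at each step.

For the upper bound, filter `A` by the monomials in generators `x₁, …, x_r` of `I`, in the
degree-lexicographic order. The colengths `h(a) = ℓ(A ⧸ ((x ^ b : b > a) : x ^ a))` form an antitone
function on `ℕ ^ r`; its sum over the cube `[0, q) ^ r` is at least `ℓ(A ⧸ I^{[q]})`, while its sum
over the simplex `|a| < n` is at most `ℓ(A ⧸ I ^ n)`. By Dickson's lemma, `h` is a finite sum of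
indicator functions of translated faces of `ℕ ^ r`. A `k`-dimensional face contributes at most
`n ^ k` to the cube and, up to a bounded shift of `n`, at least `(n + k - 1).choose k ≥ n ^ k / k!`
to the simplex. The growth of `ℓ(A ⧸ I ^ n)` forces `k ≤ d`, so the two sums differ by a factor of
at most `d!` in the limit.
-/

namespace HilbertKunz

section Colength

variable {R : Type*} [CommRing R]

/-- The length of `R ⧸ J`. -/
noncomputable def colength (J : Ideal R) : ℕ∞ := Module.length R (R ⧸ J)

lemma moduleLength_quotient (J : Ideal R) : moduleLength R (R ⧸ J) = colength J :=
  (Module.length_eq_height R (R ⧸ J)).symm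

lemma colength_antitone : Antitone (colength : Ideal R → ℕ∞) := fun _ _ h =>
  Module.length_le_of_surjective (Submodule.factor h) (Submodule.factor_surjective h)

lemma colength_top : colength (⊤ : Ideal R) = 0 := by
  have : Subsingleton (R ⧸ (⊤ : Ideal R)) := Ideal.Quotient.subsingleton_iff.2 rfl
  exact Module.length_eq_zero

lemma one_le_colength {J : Ideal R} (hJ : J ≠ ⊤) : 1 ≤ colength J := by
  have : Nontrivial (R ⧸ J) := Ideal.Quotient.nontrivial_iff.2 hJ
  exact Order.one_le_iff_pos.2 Module.length_pos

/-- Multiplication by `y`, as an injection `R ⧸ (J : y) → R ⧸ J`. -/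
def mulColon (J : Ideal R) (y : R) : R ⧸ J.colon {y} →ₗ[R] R ⧸ J :=
  Submodule.mapQ _ J (LinearMap.mulRight R y) fun a ha => by
    rwa [Submodule.mem_colon_singleton] at ha

lemma mulColon_mk (J : Ideal R) (y a : R) :
    mulColon J y (Submodule.Quotient.mk a) = Submodule.Quotient.mk (a * y) := rfl

lemma mulColon_injective (J : Ideal R) (y : R) : Function.Injective (mulColon J y) := by
  rw [← LinearMap.ker_eq_bot, LinearMap.ker_eq_bot']
  intro m hm
  obtain ⟨a, rfl⟩ := Submodule.Quotient.mk_surjective _ m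
  rw [mulColon_mk, Submodule.Quotient.mk_eq_zero] at hm
  rwa [Submodule.Quotient.mk_eq_zero, Submodule.mem_colon_singleton]

lemma mulColon_exact (J : Ideal R) (y : R) :
    Function.Exact (mulColon J y) (Submodule.factor (le_sup_left : J ≤ J ⊔ Ideal.span {y})) := by
  intro m
  obtain ⟨a, rfl⟩ := Submodule.Quotient.mk_surjective _ m
  change (Submodule.Quotient.mk a : R ⧸ (J ⊔ Ideal.span {y})) = 0 ↔ _
  rw [Submodule.Quotient.mk_eq_zero]
  constructor
  · intro h
    obtain ⟨j, hj, z, hz, rfl⟩ := Submodule.mem_sup.1 h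
    obtain ⟨b, rfl⟩ := Ideal.mem_span_singleton'.1 hz
    refine ⟨Submodule.Quotient.mk b, ?_⟩
    rw [mulColon_mk, Submodule.Quotient.eq]
    simpa using hj
  · rintro ⟨m, hm⟩
    obtain ⟨b, rfl⟩ := Submodule.Quotient.mk_surjective _ m
    rw [mulColon_mk, Submodule.Quotient.eq] at hm
    have hby : b * y ∈ J ⊔ Ideal.span {y} :=
      Submodule.mem_sup_right (Ideal.mem_span_singleton'.2 ⟨b, rfl⟩)
    simpa using Ideal.sub_mem _ hby (Submodule.mem_sup_left hm)

lemma colength_eq_colon_add_sup (J : Ideal R) (y : R) :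
    colength J = colength (J.colon {y}) + colength (J ⊔ Ideal.span {y}) :=
  Module.length_eq_add_of_exact (mulColon J y) (Submodule.factor le_sup_left)
    (mulColon_injective J y) (Submodule.factor_surjective _) (mulColon_exact J y)

lemma colength_ne_top [IsLocalRing R] [IsNoetherianRing R] {J : Ideal R}
    (hJ : maximalIdeal R ≤ J.radical) : colength J ≠ ⊤ := by
  have : Ring.KrullDimLE 0 (R ⧸ J) := by
    refine Ideal.krullDimLE_zero_quotient_iff_forall_minimalPrimes_isMaximal.2 fun P hP => ?_
    have hmP : maximalIdeal R ≤ P := hJ.trans (hP.1.1.radical_le_iff.2 hP.1.2)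
    rw [← (maximalIdeal.isMaximal R).eq_of_le hP.1.1.ne_top hmP]
    exact maximalIdeal.isMaximal R
  have : IsArtinianRing (R ⧸ J) := IsNoetherianRing.isArtinianRing_of_krullDimLE_zero
  rw [colength, Module.length_eq_of_surjective (S := R) (R := R ⧸ J) (M := R ⧸ J)
    Ideal.Quotient.mk_surjective]
  exact Module.length_ne_top

/-- The Hilbert–Samuel function `n ↦ ℓ(R ⧸ I ^ n)`, with the junk value `0` at infinite length. -/
noncomputable def hilbertSamuelFun (I : Ideal R) (n : ℕ) : ℕ := (colength (I ^ n)).toNat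

/-- The Hilbert–Kunz function `q ↦ ℓ(R ⧸ I^{[q]})`, indexed by `q` itself rather than by the
exponent of `q = p ^ e`, with the junk value `0` at infinite length. -/
noncomputable def hilbertKunzFun (I : Ideal R) (q : ℕ) : ℕ := (colength (I.bracketPow q)).toNat

lemma pow_mem_bracketPow {I : Ideal R} {x : R} (hx : x ∈ I) (q : ℕ) : x ^ q ∈ I.bracketPow q :=
  Ideal.subset_span ⟨x, hx, rfl⟩

lemma bracketPow_le_pow (I : Ideal R) (q : ℕ) : I.bracketPow q ≤ I ^ q :=
  Ideal.span_le.2 <| Set.image_subset_iff.2 fun _ hx => Ideal.pow_mem_pow hx q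

lemma bracketPow_span (p : ℕ) [Fact p.Prime] [CharP R p] (e : ℕ) (S : Set R) :
    (Ideal.span S).bracketPow (p ^ e) = Ideal.span ((· ^ p ^ e) '' S) :=
  Ideal.map_span (iterateFrobenius R p e) S

variable [IsLocalRing R] [IsNoetherianRing R] {I : Ideal R}

lemma natCast_hilbertSamuelFun (hI : maximalIdeal R ≤ I.radical) (n : ℕ) :
    (hilbertSamuelFun I n : ℕ∞) = colength (I ^ n) := by
  refine ENat.natCast_toNat (colength_ne_top ?_)
  rcases eq_or_ne n 0 with rfl | hn
  · simp [Ideal.radical_top]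
  · rwa [I.radical_pow hn]

lemma natCast_hilbertKunzFun (hI : maximalIdeal R ≤ I.radical) (q : ℕ) :
    (hilbertKunzFun I q : ℕ∞) = colength (I.bracketPow q) := by
  refine ENat.natCast_toNat (colength_ne_top (hI.trans ?_))
  exact Ideal.radical_le_radical_iff.2 fun x hx => ⟨q, pow_mem_bracketPow hx q⟩

lemma hilbertSamuelFun_le_hilbertKunzFun (hI : maximalIdeal R ≤ I.radical) (q : ℕ) :
    hilbertSamuelFun I q ≤ hilbertKunzFun I q := by
  rw [← Nat.cast_le (α := ℕ∞), natCast_hilbertSamuelFun hI, natCast_hilbertKunzFun hI]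
  exact colength_antitone (bracketPow_le_pow I q)

end Colength

section LowerBound

variable {R : Type*} [CommRing R]

lemma colength_pow_add_le (I : Ideal R) (q s : ℕ) (T : Finset R) (hT : ∀ x ∈ T, x ∈ I) :
    colength (I ^ (q + s)) ≤
      colength (I ^ (q + s) ⊔ Ideal.span ((· ^ q) '' (T : Set R))) + T.card * colength (I ^ s) := by
  classical
  induction T using Finset.induction_on with
  | empty => simp
  | insert a T ha ih =>
    rw [Finset.forall_mem_insert] at hT
    set J := I ^ (q + s) ⊔ Ideal.span ((· ^ q) '' (T : Set R))
    have pow_le_colon : I ^ s ≤ J.colon {a ^ q} := by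
      intro z hz
      rw [Submodule.mem_colon_singleton, smul_eq_mul, mul_comm]
      refine Submodule.mem_sup_left ?_
      rw [pow_add]
      exact Ideal.mul_mem_mul (Ideal.pow_mem_pow hT.1 q) hz
    have sup_insert : I ^ (q + s) ⊔ Ideal.span ((· ^ q) '' (insert a T : Set R)) =
        J ⊔ Ideal.span {a ^ q} := by
      rw [Set.image_insert_eq, Ideal.span_insert, sup_comm (Ideal.span {a ^ q}), ← sup_assoc]
    rw [Finset.card_insert_of_notMem ha, Finset.coe_insert, sup_insert]
    calc colength (I ^ (q + s)) ≤ colength J + T.card * colength (I ^ s) := ih hT.2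
      _ = colength (J.colon {a ^ q}) + colength (J ⊔ Ideal.span {a ^ q}) +
          T.card * colength (I ^ s) := by rw [← colength_eq_colon_add_sup]
      _ ≤ colength (I ^ s) + colength (J ⊔ Ideal.span {a ^ q}) + T.card * colength (I ^ s) := by
        gcongr
        exact colength_antitone pow_le_colon
      _ = colength (J ⊔ Ideal.span {a ^ q}) + (T.card + 1 : ℕ) * colength (I ^ s) := by
        push_cast
        ring

lemma exists_hilbertSamuelFun_add_le [IsLocalRing R] [IsNoetherianRing R] {I : Ideal R}
    (hI : maximalIdeal R ≤ I.radical) (p : ℕ) [Fact p.Prime] [CharP R p] :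
    ∃ r : ℕ, ∀ e s : ℕ, hilbertSamuelFun I (p ^ e + s) ≤
      hilbertKunzFun I (p ^ e) + r * hilbertSamuelFun I s := by
  obtain ⟨T, hT⟩ := IsNoetherian.noetherian I
  refine ⟨T.card, fun e s => ?_⟩
  rw [← Nat.cast_le (α := ℕ∞)]
  push_cast [natCast_hilbertSamuelFun hI, natCast_hilbertKunzFun hI]
  refine (colength_pow_add_le I (p ^ e) s T fun x hx => hT ▸ Ideal.subset_span hx).trans ?_
  gcongr
  have bracketPow_eq : I.bracketPow (p ^ e) = Ideal.span ((· ^ p ^ e) '' (T : Set R)) := by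
    rw [← bracketPow_span]
    exact congrArg (Ideal.bracketPow · (p ^ e)) hT.symm
  exact colength_antitone (bracketPow_eq.le.trans le_sup_right)

end LowerBound

section Positivity

lemma pow_succ_le_sub_pow_succ_add (n c d : ℕ) :
    n ^ (d + 1) ≤ (n - c) ^ (d + 1) + c * (d + 1) * n ^ d := by
  rcases le_total n c with h | h
  · calc n ^ (d + 1) = n * 1 * n ^ d := by ring
      _ ≤ c * (d + 1) * n ^ d := by gcongr; omega
      _ ≤ _ := Nat.le_add_left _ _
  · have bernoulli := pow_add_mul_le_add_pow (a := (n : ℤ)) (b := -c) (by positivity)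
      (by omega) (d + 1)
    zify [h]
    rw [sub_eq_add_neg]
    simp only [Nat.add_sub_cancel] at bernoulli
    push_cast at bernoulli
    linarith

lemma pow_succ_le_mul_of_sub_add_le {f g : ℕ → ℕ∞} {d k N : ℕ} (hk : 0 < k)
    (hfg : ∀ n, f (n - k) + g n ≤ f n) (hg : ∀ n, 0 < n → ((n ^ d : ℕ) : ℕ∞) ≤ N * g n) (n : ℕ) :
    ((n ^ (d + 1) : ℕ) : ℕ∞) ≤ (k * (d + 1) * N : ℕ) * f n := by
  induction n using Nat.strong_induction_on with
  | _ n ih =>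
    rcases Nat.eq_zero_or_pos n with rfl | hn
    · simp
    calc ((n ^ (d + 1) : ℕ) : ℕ∞)
        ≤ ((n - k) ^ (d + 1) + k * (d + 1) * n ^ d : ℕ) :=
          Nat.cast_le.2 (pow_succ_le_sub_pow_succ_add n k d)
      _ = ((n - k) ^ (d + 1) : ℕ) + (k * (d + 1) : ℕ) * ((n ^ d : ℕ) : ℕ∞) := by push_cast; ring
      _ ≤ (k * (d + 1) * N : ℕ) * f (n - k) + (k * (d + 1) : ℕ) * (N * g n) := by
        gcongr
        · exact ih (n - k) (by omega)
        · exact hg n hn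
      _ = (k * (d + 1) * N : ℕ) * (f (n - k) + g n) := by push_cast; ring
      _ ≤ (k * (d + 1) * N : ℕ) * f n := by gcongr; exact hfg n

variable {R : Type*} [CommRing R]

lemma exists_colon_sup_pow_le [IsNoetherianRing R] (I J : Ideal R) {x : R}
    (hx : J.colon {x} ≤ J) : ∃ k > 0, ∀ n, (J ⊔ I ^ n).colon {x} ≤ J ⊔ I ^ (n - k) := by
  obtain ⟨k, hk⟩ := I.exists_pow_inf_eq_pow_smul (J ⊔ Ideal.span {x})
  refine ⟨k + 1, k.succ_pos, fun n => ?_⟩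
  rcases lt_or_ge n k with hn | hn
  · simp [Nat.sub_eq_zero_of_le (by omega : n ≤ k + 1)]
  refine le_trans ?_ (sup_le_sup_left (Ideal.pow_le_pow_right (by omega : n - (k + 1) ≤ n - k)) J)
  intro a ha
  rw [Submodule.mem_colon_singleton, smul_eq_mul] at ha
  obtain ⟨j, hj, v, hv, hjv⟩ := Submodule.mem_sup.1 ha
  have hvx : v ∈ J ⊔ Ideal.span {x} := by
    rw [← add_sub_cancel_left j v, hjv]
    exact sub_mem (Submodule.mem_sup_right (Ideal.mem_span_singleton'.2 ⟨a, rfl⟩))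
      (Submodule.mem_sup_left hj)
  have hv' : v ∈ I ^ (n - k) • (J ⊔ Ideal.span {x}) := by
    have : v ∈ I ^ n • ⊤ ⊓ (J ⊔ Ideal.span {x}) := ⟨by simpa using hv, hvx⟩
    rw [hk n hn] at this
    exact Submodule.smul_mono le_rfl inf_le_right this
  rw [smul_eq_mul, Ideal.mul_sup] at hv'
  obtain ⟨j', hj', w, hw, hjw⟩ := Submodule.mem_sup.1 hv'
  obtain ⟨z, hz, rfl⟩ := Ideal.mem_mul_span_singleton.1 hw
  have sub_mul_mem : (a - z) * x ∈ J := by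
    have : (a - z) * x = j + j' := by linear_combination -hjw - hjv
    rw [this]
    exact J.add_mem hj (Ideal.mul_le_right hj')
  have haz : a - z ∈ J := hx (Submodule.mem_colon_singleton.2 sub_mul_mem)
  rw [← sub_add_cancel a z]
  exact add_mem (Submodule.mem_sup_left haz) (Submodule.mem_sup_right hz)

lemma exists_pow_le_mul_colength_sup_pow [IsLocalRing R] [IsNoetherianRing R] {I : Ideal R}
    (hI : I ≤ maximalIdeal R) (c : LTSeries (PrimeSpectrum R)) {Q : Ideal R}
    (hQ : Q ≤ c.head.asIdeal) :
    ∃ N : ℕ, ∀ n, 0 < n → ((n ^ c.length : ℕ) : ℕ∞) ≤ N * colength (Q ⊔ I ^ n) := by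
  induction c using RelSeries.inductionOn generalizing Q with
  | singleton P =>
    refine ⟨1, fun n hn => ?_⟩
    have hle : Q ⊔ I ^ n ≤ maximalIdeal R :=
      sup_le (hQ.trans (le_maximalIdeal P.2.ne_top)) ((Ideal.pow_le_self hn.ne').trans hI)
    simpa using one_le_colength (hle.trans_lt (maximalIdeal.isMaximal R).ne_top.lt_top).ne
  | cons c P hPc ih =>
    rw [RelSeries.head_cons] at hQ
    obtain ⟨x, hxc, hxP⟩ := SetLike.exists_of_lt (show P.asIdeal < c.head.asIdeal from hPc)
    have colon_le : P.asIdeal.colon {x} ≤ P.asIdeal := fun a ha =>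
      (P.2.mem_or_mem (Submodule.mem_colon_singleton.1 ha)).resolve_right hxP
    obtain ⟨k, hk0, hk⟩ := exists_colon_sup_pow_le I P.asIdeal colon_le
    obtain ⟨N, hN⟩ := ih (sup_le (le_of_lt hPc) ((Ideal.span_singleton_le_iff_mem _).2 hxc) :
      P.asIdeal ⊔ Ideal.span {x} ≤ _)
    have colength_add_le (n : ℕ) : colength (P.asIdeal ⊔ I ^ (n - k)) +
        colength (P.asIdeal ⊔ Ideal.span {x} ⊔ I ^ n) ≤ colength (P.asIdeal ⊔ I ^ n) := by
      rw [colength_eq_colon_add_sup (P.asIdeal ⊔ I ^ n) x, sup_right_comm]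
      gcongr
      exact colength_antitone (hk n)
    refine ⟨k * (c.length + 1) * N, fun n _ => ?_⟩
    rw [RelSeries.cons_length]
    refine (pow_succ_le_mul_of_sub_add_le hk0 colength_add_le hN n).trans ?_
    gcongr
    exact colength_antitone (sup_le_sup_right hQ _)

end Positivity

section CubesAndSimplices

open Asymptotics

lemma exists_eventually_eq_of_antitone {α : Type*} [Preorder α] [WellQuasiOrderedLE α]
    {F : ℕ → α → ℕ} (hF : Antitone F) (hFt : ∀ t, Antitone (F t)) :
    ∃ T, ∀ t, T ≤ t → F t = F T := by
  by_contra! hne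
  have exists_lt (T : ℕ) : ∃ t a, F t a < F T a := by
    obtain ⟨t, hTt, ht⟩ := hne T
    obtain ⟨a, ha⟩ := Function.ne_iff.1 ht
    exact ⟨t, a, (hF hTt a).lt_of_ne ha⟩
  choose τ a ha using exists_lt
  obtain ⟨g, hg⟩ := wellQuasiOrdered_le.exists_monotone_subseq a
  have diagonal_antitone : Antitone fun i => F (g i) (a (g i)) := fun i j hij =>
    (hF (g.monotone hij) _).trans (hFt _ (hg i j hij))
  obtain ⟨n, hn⟩ := WellFoundedLT.antitone_chain_condition diagonal_antitone
  let m := max n (τ (g n))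
  have hm : τ (g n) ≤ g m := (le_max_right _ _).trans g.strictMono.le_apply
  refine (hn m (le_max_left _ _)).not_gt ?_
  calc F (g m) (a (g m)) ≤ F (g m) (a (g n)) := hFt _ (hg n m (le_max_left _ _))
    _ ≤ F (τ (g n)) (a (g n)) := hF hm _
    _ < F (g n) (a (g n)) := ha _

lemma sum_range_multichoose_sub (n k : ℕ) :
    ∑ t ∈ Finset.range n, (n - t).multichoose k = n.multichoose (k + 1) := by
  induction n with
  | zero => simp
  | succ n ih =>
    rw [Finset.sum_range_succ', Nat.multichoose_succ_succ, ← ih, Nat.sub_zero]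
    simp only [Nat.add_sub_add_right, add_comm]

lemma pow_le_factorial_mul_multichoose (n k : ℕ) : n ^ k ≤ k.factorial * n.multichoose k := by
  rw [Nat.multichoose_eq, ← Nat.ascFactorial_eq_factorial_mul_choose']
  exact Nat.pow_succ_le_ascFactorial n k

lemma le_of_pow_le_mul_shift {S : ℕ → ℕ} {d k C U : ℕ}
    (hS : (fun n => (S n : ℝ)) =O[atTop] fun n => (n : ℝ) ^ d)
    (h : ∀ n, n ^ k ≤ C * S (n + U)) : k ≤ d := by
  by_contra! hdk
  have pow_isBigO : (fun n : ℕ => (n : ℝ) ^ k) =O[atTop] fun n => (S (n + U) : ℝ) :=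
    .of_bound C <| .of_forall fun n => by simpa using mod_cast h n
  have shift_isBigO : (fun n : ℕ => ((n + U : ℕ) : ℝ)) =O[atTop] fun n => (n : ℝ) := by
    refine .of_bound (1 + U) ?_
    filter_upwards [eventually_ge_atTop 1] with n hn
    simp only [Real.norm_natCast]
    exact_mod_cast (by nlinarith : n + U ≤ (1 + U) * n)
  have pow_isBigO_pow : (fun n : ℕ => (n : ℝ) ^ k) =O[atTop] fun n => (n : ℝ) ^ d :=
    (pow_isBigO.trans (hS.comp_tendsto (tendsto_add_atTop_nat U))).trans (shift_isBigO.pow d)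
  have pow_isLittleO_pow : (fun n : ℕ => (n : ℝ) ^ d) =o[atTop] fun n => (n : ℝ) ^ k :=
    (isLittleO_pow_pow_atTop_of_lt hdk).comp_tendsto tendsto_natCast_atTop_atTop
  refine isLittleO_irrefl ?_ (pow_isBigO_pow.trans_isLittleO pow_isLittleO_pow)
  refine Eventually.frequently ?_
  filter_upwards [eventually_ge_atTop 1] with n hn
  positivity

/-- `B` is bounded above by the number of lattice points of a finite family of cubes of side `n`,
and `S`, up to a shift, is bounded below by the number of lattice points of the simplices of the
same side and dimension: a `k`-dimensional cube has `n ^ k` points, the simplex has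
`(n + k - 1).choose k`. The multiset `L` lists the dimensions. -/
def CubeSimplexComparison (B S : ℕ → ℕ) : Prop :=
  ∃ (L : Multiset ℕ) (U : ℕ), ∀ n,
    B n ≤ (L.map (n ^ ·)).sum ∧ (L.map n.multichoose).sum ≤ S (n + U)

namespace CubeSimplexComparison

variable {B B' S S' : ℕ → ℕ}

lemma mono (h : CubeSimplexComparison B S) {v : ℕ} (hB : ∀ n, B' n ≤ B n)
    (hS : ∀ n, S n ≤ S' (n + v)) : CubeSimplexComparison B' S' := by
  obtain ⟨L, U, hLU⟩ := h
  refine ⟨L, U + v, fun n => ⟨(hB n).trans (hLU n).1, (hLU n).2.trans ?_⟩⟩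
  rw [← add_assoc]
  exact hS _

lemma add (h : CubeSimplexComparison B S) (h' : CubeSimplexComparison B' S')
    (hS : Monotone S) (hS' : Monotone S') : CubeSimplexComparison (B + B') (S + S') := by
  obtain ⟨L, U, hLU⟩ := h
  obtain ⟨L', U', hLU'⟩ := h'
  refine ⟨L + L', max U U', fun n => ?_⟩
  rw [Multiset.map_add, Multiset.sum_add, Multiset.map_add, Multiset.sum_add]
  refine ⟨add_le_add (hLU n).1 (hLU' n).1, add_le_add ((hLU n).2.trans (hS ?_))
    ((hLU' n).2.trans (hS' ?_))⟩ <;> simp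

lemma cumulate (h : CubeSimplexComparison B S) :
    CubeSimplexComparison (fun n => n * B n) (fun n => ∑ t ∈ Finset.range n, S (n - t)) := by
  obtain ⟨L, U, hLU⟩ := h
  refine ⟨L.map (· + 1), U, fun n => ⟨?_, ?_⟩⟩ <;> rw [Multiset.map_map]
  · simp only [Function.comp_def, pow_succ', Multiset.sum_map_mul_left]
    gcongr
    exact (hLU n).1
  · calc (L.map (n.multichoose ∘ (· + 1))).sum
        = ∑ t ∈ Finset.range n, (L.map (n - t).multichoose).sum := by
          simp only [Function.comp_def, ← sum_range_multichoose_sub]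
          exact Multiset.sum_map_sum_map L (Finset.range n).val
      _ ≤ ∑ t ∈ Finset.range n, S (n + U - t) := Finset.sum_le_sum fun t ht => by
          rw [Nat.sub_add_comm (Finset.mem_range.1 ht).le]
          exact (hLU (n - t)).2
      _ ≤ ∑ t ∈ Finset.range (n + U), S (n + U - t) :=
          Finset.sum_le_sum_of_subset (Finset.range_mono (Nat.le_add_right n U))

lemma sum_range {b s : ℕ → ℕ → ℕ} (h : ∀ t, CubeSimplexComparison (b t) (s t))
    (hs : ∀ t, Monotone (s t)) {T : ℕ} (hbT : ∀ t, T ≤ t → b t = b T)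
    (hsT : ∀ t, T ≤ t → s t = s T) :
    CubeSimplexComparison (fun n => ∑ t ∈ Finset.range n, b t n)
      (fun n => ∑ t ∈ Finset.range n, s t (n - t)) := by
  induction T generalizing b s with
  | zero => simpa [hbT, hsT] using (h 0).cumulate
  | succ T ih =>
    have tail := ih (fun t => h (t + 1)) (fun t => hs (t + 1))
      (fun t ht => hbT (t + 1) (by omega)) (fun t ht => hsT (t + 1) (by omega))
    have tail_mono : Monotone fun n => ∑ t ∈ Finset.range n, s (t + 1) (n - t) := fun m n hmn =>
      (Finset.sum_le_sum fun t _ => hs (t + 1) (by omega)).trans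
        (Finset.sum_le_sum_of_subset (Finset.range_mono hmn))
    refine (tail.add (h 0) tail_mono (hs 0)).mono (v := 1) (fun n => ?_) (fun n => ?_)
    · exact (Finset.sum_le_sum_of_subset (Finset.range_mono n.le_succ)).trans_eq
        (Finset.sum_range_succ' (fun t => b t n) n)
    · simp only [Finset.sum_range_succ', Pi.add_apply, Nat.add_sub_add_right]
      gcongr
      exact hs 0 (by omega)

lemma exists_le_factorial_mul (h : CubeSimplexComparison B S) {d : ℕ}
    (hS : (fun n => (S n : ℝ)) =O[atTop] fun n => (n : ℝ) ^ d) :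
    ∃ U, ∀ n, B n ≤ d.factorial * S (n + U) := by
  obtain ⟨L, U, hLU⟩ := h
  refine ⟨U, fun n => ?_⟩
  have dim_le {k : ℕ} (hk : k ∈ L) : k ≤ d := by
    refine le_of_pow_le_mul_shift hS (C := k.factorial) (U := U) fun n => ?_
    refine (pow_le_factorial_mul_multichoose n k).trans ?_
    gcongr
    exact (Multiset.single_le_sum (fun _ _ => Nat.zero_le _) _
      (Multiset.mem_map_of_mem _ hk)).trans (hLU n).2
  calc B n ≤ (L.map (n ^ ·)).sum := (hLU n).1
    _ ≤ (L.map fun k => d.factorial * n.multichoose k).sum :=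
      Multiset.sum_map_le_sum_map _ _ fun k hk =>
        (pow_le_factorial_mul_multichoose n k).trans
          (Nat.mul_le_mul_right _ (Nat.factorial_le (dim_le hk)))
    _ = d.factorial * (L.map n.multichoose).sum := Multiset.sum_map_mul_left
    _ ≤ d.factorial * S (n + U) := by gcongr; exact (hLU n).2

end CubeSimplexComparison

/-- The lattice points of the cube `[0, n) ^ r`. -/
def box (r n : ℕ) : Finset (Fin r → ℕ) := Fintype.piFinset fun _ => Finset.range n

/-- The lattice points `a ∈ ℕ ^ r` with `∑ i, a i < n`. -/
def simplex (r n : ℕ) : Finset (Fin r → ℕ) := {a ∈ box r n | ∑ i, a i < n}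

lemma mem_box {r n : ℕ} {a : Fin r → ℕ} : a ∈ box r n ↔ ∀ i, a i < n := by
  simp [box]

lemma mem_simplex {r n : ℕ} {a : Fin r → ℕ} : a ∈ simplex r n ↔ ∑ i, a i < n := by
  simp only [simplex, Finset.mem_filter, mem_box, and_iff_right_iff_imp]
  exact fun h i => (Finset.single_le_sum (fun _ _ => Nat.zero_le _) (Finset.mem_univ i)).trans_lt h

lemma box_zero_left (n : ℕ) : box 0 n = {0} := by
  ext a
  simp [mem_box, Subsingleton.elim a 0]

lemma simplex_zero_succ (n : ℕ) : simplex 0 (n + 1) = {0} := by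
  ext a
  simp [mem_simplex, Subsingleton.elim a 0]

lemma simplex_mono (r : ℕ) : Monotone (simplex r) := fun _ _ h _ ha =>
  mem_simplex.2 ((mem_simplex.1 ha).trans_le h)

lemma sum_box_succ {r n : ℕ} (φ : (Fin (r + 1) → ℕ) → ℕ) :
    ∑ a ∈ box (r + 1) n, φ a = ∑ t ∈ Finset.range n, ∑ b ∈ box r n, φ (Fin.cons t b) := by
  rw [← Finset.sum_product']
  refine (Finset.sum_equiv (Fin.consEquiv fun _ => ℕ) ?_ ?_).symm
  · rintro ⟨t, b⟩
    simp [mem_box, Fin.forall_fin_succ, Fin.consEquiv]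
  · rintro ⟨t, b⟩ _
    simp [Fin.consEquiv]

lemma sum_simplex_succ {r n : ℕ} (φ : (Fin (r + 1) → ℕ) → ℕ) :
    ∑ a ∈ simplex (r + 1) n, φ a =
      ∑ t ∈ Finset.range n, ∑ b ∈ simplex r (n - t), φ (Fin.cons t b) := by
  rw [Finset.sum_sigma']
  refine Finset.sum_bij' (fun a _ => ⟨a 0, Fin.tail a⟩) (fun x _ => Fin.cons x.1 x.2) ?_ ?_ ?_ ?_ ?_
  · intro a h
    simp only [mem_simplex, Fin.sum_univ_succ] at h
    simp only [Finset.mem_sigma, Finset.mem_range, mem_simplex, Fin.tail]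
    omega
  · rintro ⟨t, b⟩ h
    simp only [Finset.mem_sigma, Finset.mem_range, mem_simplex] at h
    simp only [mem_simplex, Fin.sum_univ_succ, Fin.cons_zero, Fin.cons_succ]
    omega
  all_goals simp

theorem cubeSimplexComparison_sum {r : ℕ} {h : (Fin r → ℕ) → ℕ} (hh : Antitone h) :
    CubeSimplexComparison (fun n => ∑ a ∈ box r n, h a) (fun n => ∑ a ∈ simplex r n, h a) := by
  induction r with
  | zero =>
    refine ⟨.replicate (h 0) 0, 1, fun n => ?_⟩
    simp [box_zero_left, simplex_zero_succ]
  | succ r ih =>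
    set F : ℕ → (Fin r → ℕ) → ℕ := fun t b => h (Fin.cons t b)
    have hF : Antitone F := fun s t hst b => hh (Fin.cons_le_cons.2 ⟨hst, le_rfl⟩)
    have hFt (t : ℕ) : Antitone (F t) := fun b c hbc => hh (Fin.cons_le_cons.2 ⟨le_rfl, hbc⟩)
    obtain ⟨T, hT⟩ := exists_eventually_eq_of_antitone hF hFt
    simp only [sum_box_succ, sum_simplex_succ]
    refine CubeSimplexComparison.sum_range (T := T) (b := fun t n => ∑ b ∈ box r n, F t b)
      (s := fun t n => ∑ b ∈ simplex r n, F t b) (fun t => ih (hFt t))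
      (fun t m n hmn => Finset.sum_le_sum_of_subset (simplex_mono r hmn)) ?_ ?_ <;>
    · intro t ht
      simp only [hT t ht]

end CubesAndSimplices

section MonomialFiltration

variable {R : Type*} [CommRing R]

lemma colength_sup_span_eq_sum {α β : Type*} [LinearOrder β] {key : α → β}
    (hkey : Function.Injective key) {y : α → R} (hy : Ideal.span (Set.range y) = ⊤) (K : Ideal R)
    {T : Finset α} (hT : ∀ a ∈ T, ∀ b, key b ≤ key a → b ∈ T) :
    colength (K ⊔ Ideal.span (y '' {b | b ∉ T})) =
      ∑ a ∈ T, colength ((K ⊔ Ideal.span (y '' {b | key a < key b})).colon {y a}) := by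
  classical
  induction T using Finset.induction_on_max_value key with
  | empty => simp [hy, colength_top]
  | insert a T haT hmax ih =>
    have lowerSet : ∀ c ∈ T, ∀ b, key b ≤ key c → b ∈ T := fun c hc b hb =>
      (Finset.mem_insert.1 (hT c (Finset.mem_insert_of_mem hc) b hb)).resolve_left fun hba =>
        haT (hkey ((hmax c hc).antisymm (hba ▸ hb)) ▸ hc)
    have compl_insert : {b | b ∉ insert a T} = {b | key a < key b} := by
      ext b
      refine ⟨fun hb => not_le.1 fun hba => hb (hT a (Finset.mem_insert_self a T) b hba),
        fun hab hb => ?_⟩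
      rcases Finset.mem_insert.1 hb with rfl | hb
      exacts [lt_irrefl _ hab, (hmax b hb).not_gt hab]
    have compl_eq : {b | b ∉ T} = insert a {b | b ∉ insert a T} := by
      ext b
      by_cases hba : b = a <;> simp [hba, haT]
    rw [Finset.sum_insert haT, ← ih lowerSet, colength_eq_colon_add_sup _ (y a), compl_eq,
      compl_insert, Set.image_insert_eq, Ideal.span_insert, sup_comm (Ideal.span {y a}), sup_assoc]

variable {r : ℕ}

/-- An exponent vector as an element of the degree-lexicographic order. -/
noncomputable def degLex (a : Fin r → ℕ) : DegLex (Fin r →₀ ℕ) :=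
  toDegLex (Finsupp.equivFunOnFinite.symm a)

lemma degLex_injective : Function.Injective (degLex (r := r)) :=
  toDegLex.injective.comp Finsupp.equivFunOnFinite.symm.injective

lemma degLex_add (a b : Fin r → ℕ) : degLex (a + b) = degLex a + degLex b := by
  rw [degLex, degLex, degLex, ← toDegLex_add]
  congr 1
  ext i
  simp

lemma degLex_lt_of_sum_lt {a b : Fin r → ℕ} (h : ∑ i, a i < ∑ i, b i) : degLex a < degLex b :=
  Finsupp.DegLex.lt_iff.2 (.inl (by simpa [degLex, Finsupp.degree_eq_sum] using h))

lemma sum_le_of_degLex_le {a b : Fin r → ℕ} (h : degLex a ≤ degLex b) : ∑ i, a i ≤ ∑ i, b i :=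
  not_lt.1 fun hba => h.not_gt (degLex_lt_of_sum_lt hba)

/-- The monomial `x ^ a` in a family `x` of ring elements. -/
def monomial (x : Fin r → R) (a : Fin r → ℕ) : R := ∏ i, x i ^ a i

variable (x : Fin r → R)

lemma monomial_zero : monomial x 0 = 1 := by
  simp [monomial]

lemma monomial_add (a b : Fin r → ℕ) : monomial x (a + b) = monomial x a * monomial x b := by
  simp [monomial, pow_add, Finset.prod_mul_distrib]

lemma monomial_add_single (a : Fin r → ℕ) (i : Fin r) :
    monomial x (a + Pi.single i 1) = monomial x a * x i := by
  rw [monomial_add]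
  simp [monomial, Pi.single_apply, pow_ite]

lemma sum_add_single (a : Fin r → ℕ) (i : Fin r) :
    ∑ j, (a + Pi.single i 1 : Fin r → ℕ) j = ∑ j, a j + 1 := by
  simp [Finset.sum_add_distrib]

lemma monomial_mem_of_pow_mem {K : Ideal R} {q : ℕ} (hK : ∀ i, x i ^ q ∈ K) {a : Fin r → ℕ}
    (ha : a ∉ box r q) : monomial x a ∈ K := by
  rw [mem_box] at ha
  push Not at ha
  obtain ⟨i, hi⟩ := ha
  have dvd : x i ^ q ∣ monomial x a :=
    (pow_dvd_pow _ hi).trans (Finset.dvd_prod_of_mem _ (Finset.mem_univ i))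
  exact Ideal.mem_of_dvd K dvd (hK i)

/-- The ideal generated by the monomials in `x` with exponent in `S`. -/
def monomialIdeal (S : Set (Fin r → ℕ)) : Ideal R := Ideal.span (monomial x '' S)

lemma span_range_monomial : Ideal.span (Set.range (monomial x)) = ⊤ :=
  (Ideal.eq_top_iff_one _).2 (Ideal.subset_span ⟨0, monomial_zero x⟩)

lemma monomial_mem_monomialIdeal {S : Set (Fin r → ℕ)} {a : Fin r → ℕ} (ha : a ∈ S) :
    monomial x a ∈ monomialIdeal x S :=
  Ideal.subset_span ⟨a, ha, rfl⟩

lemma span_range_pow_le_monomialIdeal (n : ℕ) :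
    Ideal.span (Set.range x) ^ n ≤ monomialIdeal x {b | n ≤ ∑ i, b i} := by
  induction n with
  | zero => simp [monomialIdeal, span_range_monomial]
  | succ n ih =>
    rw [pow_succ]
    refine (Ideal.mul_mono_left ih).trans ?_
    rw [monomialIdeal, Ideal.span_mul_span', Ideal.span_le]
    rintro _ ⟨_, ⟨b, hb, rfl⟩, _, ⟨i, rfl⟩, rfl⟩
    beta_reduce
    rw [← monomial_add_single]
    refine monomial_mem_monomialIdeal x ?_
    rw [Set.mem_ofPred_eq, sum_add_single]
    exact Nat.succ_le_succ hb

/-- The colength of the ideal `((x ^ b : b > a) : x ^ a)`, that is, the length of the cyclic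
quotient `(x ^ b : b ≥ a) ⧸ (x ^ b : b > a)` of the monomial filtration. -/
noncomputable def monomialColength (a : Fin r → ℕ) : ℕ∞ :=
  colength ((monomialIdeal x {b | degLex a < degLex b}).colon {monomial x a})

lemma monomialColength_antitone : Antitone (monomialColength x) := by
  intro a b hab
  obtain ⟨c, rfl⟩ : ∃ c, b = a + c := ⟨b - a, (add_tsub_cancel_of_le hab).symm⟩
  refine colength_antitone fun z hz => ?_
  rw [Submodule.mem_colon_singleton, smul_eq_mul] at hz ⊢
  have mul_mem : z * monomial x a * monomial x c ∈
      monomialIdeal x {b | degLex a < degLex b} * Ideal.span {monomial x c} :=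
    Ideal.mul_mem_mul hz (Ideal.mem_span_singleton_self _)
  rw [monomial_add, ← mul_assoc]
  refine (?_ : _ ≤ monomialIdeal x _) mul_mem
  rw [monomialIdeal, Ideal.span_mul_span', Ideal.span_le]
  rintro _ ⟨_, ⟨b, hb, rfl⟩, _, rfl, rfl⟩
  beta_reduce
  rw [← monomial_add]
  refine monomial_mem_monomialIdeal x ?_
  rw [Set.mem_ofPred_eq, degLex_add, degLex_add]
  exact add_lt_add_left hb _

lemma monomialColength_le_colength_span (a : Fin r → ℕ) :
    monomialColength x a ≤ colength (Ideal.span (Set.range x)) := by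
  refine colength_antitone (Ideal.span_le.2 ?_)
  rintro _ ⟨i, rfl⟩
  rw [SetLike.mem_coe, Submodule.mem_colon_singleton, smul_eq_mul, mul_comm,
    ← monomial_add_single]
  refine monomial_mem_monomialIdeal x (degLex_lt_of_sum_lt ?_)
  rw [sum_add_single]
  exact Nat.lt_succ_self _

lemma mem_simplex_of_degLex_le {n : ℕ} {a : Fin r → ℕ} (ha : a ∈ simplex r n) (b : Fin r → ℕ)
    (hb : degLex b ≤ degLex a) : b ∈ simplex r n :=
  mem_simplex.2 ((sum_le_of_degLex_le hb).trans_lt (mem_simplex.1 ha))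

lemma sum_monomialColength_simplex_le (n : ℕ) :
    ∑ a ∈ simplex r n, monomialColength x a ≤ colength (Ideal.span (Set.range x) ^ n) := by
  have filtration := colength_sup_span_eq_sum degLex_injective (span_range_monomial x) ⊥
    (T := simplex r n) fun _ => mem_simplex_of_degLex_le
  simp only [bot_sup_eq] at filtration
  refine filtration.symm.le.trans (colength_antitone ?_)
  simpa only [mem_simplex, not_lt, monomialIdeal] using span_range_pow_le_monomialIdeal x n

lemma exists_box_subset_simplex (r q : ℕ) : ∃ n, box r q ⊆ simplex r n := by
  refine ⟨r * q + 1, fun a ha => ?_⟩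
  have sum_le := Finset.sum_le_card_nsmul Finset.univ a q fun i _ => (mem_box.1 ha i).le
  rw [Finset.card_univ, Fintype.card_fin, smul_eq_mul] at sum_le
  exact mem_simplex.2 (Nat.lt_succ_of_le sum_le)

lemma colength_le_sum_monomialColength_box {K : Ideal R} {q : ℕ} (hK : ∀ i, x i ^ q ∈ K) :
    colength K ≤ ∑ a ∈ box r q, monomialColength x a := by
  obtain ⟨n, hn⟩ := exists_box_subset_simplex r q
  have sup_eq : K ⊔ Ideal.span (monomial x '' {b | b ∉ simplex r n}) = K := by
    refine sup_eq_left.2 (Ideal.span_le.2 ?_)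
    rintro _ ⟨b, hb, rfl⟩
    exact monomial_mem_of_pow_mem x hK fun hbq => hb (hn hbq)
  rw [← sup_eq, colength_sup_span_eq_sum degLex_injective (span_range_monomial x) K
    fun _ => mem_simplex_of_degLex_le, ← Finset.sum_subset hn]
  · exact Finset.sum_le_sum fun a _ =>
      colength_antitone (Submodule.colon_mono le_sup_right le_rfl)
  · intro a _ ha
    rw [(Submodule.colon_eq_top_iff_subset _).2, colength_top]
    exact Set.singleton_subset_iff.2 (Submodule.mem_sup_left (monomial_mem_of_pow_mem x hK ha))

theorem cubeSimplexComparison_hilbertKunzFun [IsLocalRing R] [IsNoetherianRing R] {I : Ideal R}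
    (hI : maximalIdeal R ≤ I.radical) :
    CubeSimplexComparison (hilbertKunzFun I) (hilbertSamuelFun I) := by
  obtain ⟨r, x, hx⟩ := Submodule.fg_iff_exists_fin_generating_family.1
    (IsNoetherian.noetherian I)
  change Ideal.span (Set.range x) = I at hx
  have ne_top (a : Fin r → ℕ) : monomialColength x a ≠ ⊤ :=
    ne_top_of_le_ne_top (colength_ne_top (hx ▸ hI)) (monomialColength_le_colength_span x a)
  have toNat_antitone : Antitone fun a => (monomialColength x a).toNat := fun a b hab =>
    ENat.toNat_le_toNat (monomialColength_antitone x hab) (ne_top a)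
  refine (cubeSimplexComparison_sum toNat_antitone).mono (v := 0) (fun q => ?_) fun n => ?_ <;>
    rw [← Nat.cast_le (α := ℕ∞)]
  · rw [natCast_hilbertKunzFun hI, Nat.cast_sum]
    simp only [ENat.natCast_toNat (ne_top _)]
    exact colength_le_sum_monomialColength_box x fun i =>
      pow_mem_bracketPow (hx ▸ Ideal.subset_span ⟨i, rfl⟩) q
  · rw [natCast_hilbertSamuelFun hI, Nat.cast_sum]
    simp only [ENat.natCast_toNat (ne_top _)]
    exact hx ▸ sum_monomialColength_simplex_le x n

end MonomialFiltration

section Limits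

lemma tendsto_comp_div_pow {ι : Type*} {l : Filter ι} {a : ℕ → ℝ} {d : ℕ} {E c : ℝ}
    (ha : Tendsto (fun n : ℕ => a n / (n : ℝ) ^ d) atTop (𝓝 E)) {m q : ι → ℕ}
    (hm : Tendsto m l atTop) (hmq : Tendsto (fun i => (m i : ℝ) / q i) l (𝓝 c)) :
    Tendsto (fun i => a (m i) / (q i : ℝ) ^ d) l (𝓝 (E * c ^ d)) := by
  refine ((ha.comp hm).mul (hmq.pow d)).congr' ?_
  filter_upwards [hm.eventually_gt_atTop 0] with i hi
  rw [Function.comp_apply, div_pow, div_mul_div_cancel₀ (by positivity)]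

lemma tendsto_add_const_div {ι : Type*} {l : Filter ι} {q : ι → ℕ} (hq : Tendsto q l atTop)
    (U : ℕ) : Tendsto (fun i => ((q i + U : ℕ) : ℝ) / q i) l (𝓝 1) := by
  have lim := (tendsto_const_div_atTop_nhds_zero_nat (U : ℝ)).comp hq |>.const_add 1
  rw [add_zero] at lim
  refine lim.congr' ?_
  filter_upwards [hq.eventually_gt_atTop 0] with i hi
  have : (q i : ℝ) ≠ 0 := by positivity
  simp only [Function.comp_apply]
  push_cast
  field_simp

lemma tendsto_mul_const_div {ι : Type*} {l : Filter ι} {q : ι → ℕ} (hq : Tendsto q l atTop)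
    (C : ℕ) : Tendsto (fun i => ((C * q i : ℕ) : ℝ) / q i) l (𝓝 C) := by
  refine tendsto_const_nhds.congr' ?_
  filter_upwards [hq.eventually_gt_atTop 0] with i hi
  have : (q i : ℝ) ≠ 0 := by positivity
  push_cast
  field_simp

lemma tendsto_prime_pow_atTop (p : ℕ) [hp : Fact p.Prime] :
    Tendsto (fun e : ℕ => p ^ e) atTop atTop :=
  tendsto_pow_atTop_atTop_of_one_lt hp.out.one_lt

lemma pow_add_self_le_succ_pow {x : ℝ} (hx : 0 ≤ x) {d : ℕ} (hd : 2 ≤ d) :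
    x ^ d + x ≤ (x + 1) ^ d := by
  obtain ⟨j, rfl⟩ := Nat.exists_eq_add_of_le' hd
  calc x ^ (j + 2) + x ≤ x * x ^ (j + 1) + (x + 1) := by rw [← pow_succ']; linarith
    _ ≤ x * (x + 1) ^ (j + 1) + (x + 1) ^ (j + 1) := by
      gcongr
      · linarith
      · exact le_self_pow₀ (by linarith) (by omega)
    _ = (x + 1) ^ (j + 2) := by ring

variable {R : Type*} [CommRing R] [IsLocalRing R] [IsNoetherianRing R] {I : Ideal R} {d : ℕ}
  {E H : ℝ}

lemma samuelLimit_pos (hd : ringKrullDim R = d)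
    (hI : I.radical = maximalIdeal R)
    (hE : Tendsto (fun n => (hilbertSamuelFun I n : ℝ) / (n : ℝ) ^ d) atTop (𝓝 E)) : 0 < E := by
  obtain ⟨c, rfl⟩ := Order.le_krullDim_iff.1 hd.ge
  obtain ⟨N, hN⟩ := exists_pow_le_mul_colength_sup_pow (hI ▸ Ideal.le_radical) c bot_le
  simp only [bot_sup_eq, ← natCast_hilbertSamuelFun hI.ge] at hN
  have one_le : 1 ≤ N * E := by
    refine ge_of_tendsto (hE.const_mul (N : ℝ)) ?_
    filter_upwards [eventually_gt_atTop 0] with n hn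
    rw [← mul_div_assoc, one_le_div (by positivity)]
    exact_mod_cast hN n hn
  exact pos_of_mul_pos_right (one_pos.trans_le one_le) N.cast_nonneg

variable {p : ℕ} [Fact p.Prime]

lemma samuelLimit_le_kunzLimit (hI : maximalIdeal R ≤ I.radical)
    (hE : Tendsto (fun n => (hilbertSamuelFun I n : ℝ) / (n : ℝ) ^ d) atTop (𝓝 E))
    (hH : Tendsto (fun e => (hilbertKunzFun I (p ^ e) : ℝ) / ((p ^ e : ℕ) : ℝ) ^ d) atTop (𝓝 H)) :
    E ≤ H := by
  refine le_of_tendsto_of_tendsto' (hE.comp (tendsto_prime_pow_atTop p)) hH fun e => ?_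
  simp only [Function.comp_apply]
  gcongr
  exact hilbertSamuelFun_le_hilbertKunzFun hI _

lemma kunzLimit_le_factorial_mul_samuelLimit (hI : maximalIdeal R ≤ I.radical)
    (hE : Tendsto (fun n => (hilbertSamuelFun I n : ℝ) / (n : ℝ) ^ d) atTop (𝓝 E))
    (hH : Tendsto (fun e => (hilbertKunzFun I (p ^ e) : ℝ) / ((p ^ e : ℕ) : ℝ) ^ d) atTop (𝓝 H)) :
    H ≤ d.factorial * E := by
  have eq_zero_of_pow_eq_zero : ∀ᶠ n : ℕ in atTop, (n : ℝ) ^ d = 0 →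
      (hilbertSamuelFun I n : ℝ) = 0 := by
    filter_upwards [eventually_gt_atTop 0] with n hn h0
    exact absurd h0 (by positivity)
  have hSd : (fun n => (hilbertSamuelFun I n : ℝ)) =O[atTop] fun n => (n : ℝ) ^ d :=
    Asymptotics.isBigO_of_div_tendsto_nhds eq_zero_of_pow_eq_zero E hE
  obtain ⟨U, hU⟩ := (cubeSimplexComparison_hilbertKunzFun hI).exists_le_factorial_mul hSd
  have hp := tendsto_prime_pow_atTop p
  have shifted := (tendsto_comp_div_pow hE (hp.atTop_add_nonneg fun _ => Nat.zero_le U)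
    (tendsto_add_const_div hp U)).const_mul (d.factorial : ℝ)
  rw [one_pow, mul_one] at shifted
  refine le_of_tendsto_of_tendsto' hH shifted fun e => ?_
  rw [← mul_div_assoc]
  gcongr
  exact_mod_cast hU (p ^ e)

lemma exists_samuelLimit_mul_succ_pow_le [CharP R p] (hI : maximalIdeal R ≤ I.radical)
    (hE : Tendsto (fun n => (hilbertSamuelFun I n : ℝ) / (n : ℝ) ^ d) atTop (𝓝 E))
    (hH : Tendsto (fun e => (hilbertKunzFun I (p ^ e) : ℝ) / ((p ^ e : ℕ) : ℝ) ^ d) atTop (𝓝 H)) :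
    ∃ r : ℕ, ∀ k : ℕ, E * ((p ^ k : ℕ) + 1 : ℝ) ^ d ≤ H * ((p ^ k : ℕ) : ℝ) ^ d + r * E := by
  obtain ⟨r, hr⟩ := exists_hilbertSamuelFun_add_le hI p
  refine ⟨r, fun k => ?_⟩
  have hp := tendsto_prime_pow_atTop p
  have samuel := tendsto_comp_div_pow hE (hp.const_mul_atTop' (p ^ k).succ_pos)
    (tendsto_mul_const_div hp (p ^ k + 1))
  have kunz : Tendsto (fun e => (hilbertKunzFun I (p ^ (e + k)) : ℝ) / ((p ^ e : ℕ) : ℝ) ^ d) atTop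
      (𝓝 (H * ((p ^ k : ℕ) : ℝ) ^ d)) := by
    refine ((hH.comp (tendsto_add_atTop_nat k)).mul_const _).congr fun e => ?_
    have : (p : ℝ) ≠ 0 := mod_cast (Fact.out : p.Prime).ne_zero
    simp only [Function.comp_apply]
    push_cast [pow_add]
    field_simp
    ring
  rw [Nat.cast_succ] at samuel
  refine le_of_tendsto_of_tendsto' samuel
    (kunz.add ((hE.comp hp).const_mul (r : ℝ))) fun e => ?_
  rw [Function.comp_apply, ← mul_div_assoc, ← add_div]
  gcongr
  rw [Nat.succ_mul, ← pow_add, add_comm k]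
  exact_mod_cast hr (e + k) (p ^ e)

lemma samuelLimit_lt_kunzLimit [CharP R p] (hd : 2 ≤ d) (hE₀ : 0 < E)
    (hI : maximalIdeal R ≤ I.radical)
    (hE : Tendsto (fun n => (hilbertSamuelFun I n : ℝ) / (n : ℝ) ^ d) atTop (𝓝 E))
    (hH : Tendsto (fun e => (hilbertKunzFun I (p ^ e) : ℝ) / ((p ^ e : ℕ) : ℝ) ^ d) atTop (𝓝 H)) :
    E < H := by
  obtain ⟨r, hr⟩ := exists_samuelLimit_mul_succ_pow_le hI hE hH
  obtain ⟨k, hk⟩ : ∃ k, r < p ^ k := ⟨r, Nat.lt_pow_self (Fact.out : p.Prime).one_lt⟩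
  have hrP : (r : ℝ) < (p ^ k : ℕ) := mod_cast hk
  have hP : (0 : ℝ) < (p ^ k : ℕ) := r.cast_nonneg.trans_lt hrP
  refine lt_of_mul_lt_mul_right ?_ (pow_nonneg hP.le d)
  have pow_add_le := mul_le_mul_of_nonneg_left (pow_add_self_le_succ_pow hP.le hd) hE₀.le
  have r_mul_lt := mul_lt_mul_of_pos_right hrP hE₀
  linarith [hr k]

end Limits

end HilbertKunz

theorem hilbert_kunz_between_general (A : Type*) [CommRing A] [IsLocalRing A]
    [IsNoetherianRing A] (p : ℕ) [Fact p.Prime] [CharP A p]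
    (d : ℕ) (hd : ringKrullDim A = d)
    (I : Ideal A) (hI : I.radical = IsLocalRing.maximalIdeal A)
    (eI eHK : ℝ)
    (heI : Filter.Tendsto
      (fun n : ℕ =>
        (d.factorial : ℝ) * ((moduleLength A (A ⧸ I ^ n)).toNat : ℝ) / (n : ℝ) ^ d)
      Filter.atTop (nhds eI))
    (heHK : Filter.Tendsto
      (fun e : ℕ =>
        ((moduleLength A (A ⧸ I.bracketPow (p ^ e))).toNat : ℝ) / (p : ℝ) ^ (e * d))
      Filter.atTop (nhds eHK)) :
    eI / (d.factorial : ℝ) ≤ eHK ∧ eHK ≤ eI ∧ (2 ≤ d → eI / (d.factorial : ℝ) < eHK) := by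
  have factorial_ne_zero : (d.factorial : ℝ) ≠ 0 := mod_cast d.factorial_ne_zero
  simp only [HilbertKunz.moduleLength_quotient] at heI heHK
  have hE : Tendsto (fun n => (HilbertKunz.hilbertSamuelFun I n : ℝ) / (n : ℝ) ^ d) atTop
      (𝓝 (eI / d.factorial)) :=
    (heI.div_const _).congr fun n => by
      rw [mul_div_assoc, mul_div_cancel_left₀ _ factorial_ne_zero, HilbertKunz.hilbertSamuelFun]
  have hH : Tendsto (fun e => (HilbertKunz.hilbertKunzFun I (p ^ e) : ℝ) / ((p ^ e : ℕ) : ℝ) ^ d)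
      atTop (𝓝 eHK) :=
    heHK.congr fun e => by rw [Nat.cast_pow, ← pow_mul, HilbertKunz.hilbertKunzFun]
  refine ⟨HilbertKunz.samuelLimit_le_kunzLimit hI.ge hE hH, ?_, fun hd₂ =>
    HilbertKunz.samuelLimit_lt_kunzLimit hd₂ (HilbertKunz.samuelLimit_pos hd hI hE) hI.ge hE hH⟩
  simpa only [mul_div_cancel₀ _ factorial_ne_zero] using
    HilbertKunz.kunzLimit_le_factorial_mul_samuelLimit hI.ge hE hH

/-- For an `𝔪`-primary ideal `I` of a `d`-dimensional complete equidimensional reduced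
Noetherian local ring of characteristic `p`, one has `e(I)/d! ≤ e_HK(I) ≤ e(I)`;
moreover the left inequality is strict when `d ≥ 2`. -/
theorem hilbert_kunz_between (A : Type*) [CommRing A] [IsLocalRing A]
    [IsNoetherianRing A] [IsReduced A] (p : ℕ) [Fact p.Prime] [CharP A p]
    (hcomp : IsAdicComplete (IsLocalRing.maximalIdeal A) A)
    (d : ℕ) (hd : ringKrullDim A = d)
    (hequi : ∀ P ∈ minimalPrimes A, ringKrullDim (A ⧸ P) = d)
    (I : Ideal A) (hI : I.radical = IsLocalRing.maximalIdeal A)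
    (eI eHK : ℝ)
    (heI : Filter.Tendsto
      (fun n : ℕ =>
        (d.factorial : ℝ) * ((moduleLength A (A ⧸ I ^ n)).toNat : ℝ) / (n : ℝ) ^ d)
      Filter.atTop (nhds eI))
    (heHK : Filter.Tendsto
      (fun e : ℕ =>
        ((moduleLength A (A ⧸ I.bracketPow (p ^ e))).toNat : ℝ) / (p : ℝ) ^ (e * d))
      Filter.atTop (nhds eHK)) :
    eI / (d.factorial : ℝ) ≤ eHK ∧ eHK ≤ eI ∧ (2 ≤ d → eI / (d.factorial : ℝ) < eHK) := by
  exact hilbert_kunz_between_general A p d hd I hI eI eHK heI heHK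
end

section
/- (Rees) Let (A, 𝔪) be a d-dimensional complete equidimensional reduced Noetherian local ring of prime characteristic p and let I ⊆ I' be 𝔪-primary ideals of A. Then e(I') = e(I) if and only if every element of I' is integral over I. -/
open IsLocalRing Filter Topology
open scoped TensorProduct

/-!
Suppose `e(I') = e(I)`. A coefficient field `k ⊆ A` turns lengths into dimensions over `k`. The
fibre ring of `I` has polynomial growth of degree at most `d`, so it has `d` homogeneous parameters
of a common degree `N`; they lift to `y₁, …, y_d ∈ I ^ N` with `I ^ (N * (n + m)) ≤ (y) ^ n` for a
fixed `m` and all `n`. Then `A` is a finite torsion-free module over the normal domain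
`k⟦Y₁, …, Y_d⟧`. For `z ∈ I'`, let `f` be the minimal polynomial of `z ^ N` over this domain and
`r` its degree. If the coefficient of `T ^ (r - i)` in `f` lies in `(Y) ^ i` for all `i`, then `f`
is an equation of integral dependence of `z ^ N` over `(y) ⊆ I ^ N`, and `z` is integral over `I`.
Otherwise `f`, as a power series in `Y` and `T`, has order `o < r`, and counting monomials bounds
the colength of `((y) + (z ^ N)) ^ n` from above by that of `(y) ^ n`, giving
`N ^ d * e(I') + r ≤ N ^ d * e(I) + o`, which is absurd. The converse holds because integrality
gives `I' ^ (n + c) ≤ I ^ n` for a fixed `c`.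
-/

namespace ReesMultiplicity

section CoefficientField

open Polynomial

section SquareZero

variable {k D : Type*} [Field k] [CommRing D] {π : D →+* k}

theorem isField_of_pow_mem (hπ : Function.Surjective π) {S : Subring D}
    (hinj : ∀ s ∈ S, π s = 0 → s = 0) {n : ℕ} (hn : n ≠ 0) (hpow : ∀ b : D, b ^ n ∈ S) :
    IsField S := by
  have : Nontrivial D := hπ.nontrivial
  refine ⟨⟨0, 1, zero_ne_one⟩, mul_comm, fun {s} hs ↦ ?_⟩
  have hs0 : π s ≠ 0 := fun h ↦ hs (Subtype.ext (hinj s s.2 h))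
  obtain ⟨t, ht⟩ := hπ (π s)⁻¹
  obtain ⟨m, rfl⟩ := Nat.exists_eq_succ_of_ne_zero hn
  refine ⟨s ^ m * ⟨t ^ (m + 1), hpow t⟩, sub_eq_zero.1 (Subtype.ext (hinj _ (Subtype.prop _) ?_))⟩
  have hst : (s * (s ^ m * ⟨t ^ (m + 1), hpow t⟩) - 1 : S) = ((s : D) * t) ^ (m + 1) - 1 := by
    push_cast
    ring
  rw [hst, map_sub, map_pow, map_mul, ht, mul_inv_cancel₀ hs0, one_pow, map_one, sub_self]

variable (p : ℕ) [Fact p.Prime]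

/- `t ^ p` lies in the field `S` but is not a `p`-th power there, so `S[X]/(X ^ p - t ^ p)` is a
field and `π` is injective on its image `S[t]`. -/
theorem exists_subring_of_notMem_map [CharP k p] (hπ : Function.Surjective π) {S : Subring D}
    (hinj : ∀ s ∈ S, π s = 0 → s = 0) (hpow : ∀ b : D, b ^ p ∈ S) {t : D} (ht : π t ∉ S.map π) :
    ∃ T : Subring D, S ≤ T ∧ t ∈ T ∧ ∀ s ∈ T, π s = 0 → s = 0 := by
  have hp : p.Prime := Fact.out
  let : Field S := (isField_of_pow_mem hπ hinj hp.ne_zero hpow).toField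
  have hroot : ∀ b : S, b ^ p ≠ ⟨t ^ p, hpow t⟩ := by
    intro b hb
    have hbt : frobenius k p (π b) = frobenius k p (π t) :=
      ((map_pow π (b : D) p).symm.trans (congrArg (fun s : S ↦ π s) hb)).trans (map_pow π t p)
    exact ht ⟨b, b.2, frobenius_inj k p hbt⟩
  have : Fact (Irreducible (X ^ p - C (⟨t ^ p, hpow t⟩ : S))) :=
    ⟨X_pow_sub_C_irreducible_of_prime hp hroot⟩
  let ψ : AdjoinRoot (X ^ p - C (⟨t ^ p, hpow t⟩ : S)) →+* D :=
    AdjoinRoot.lift S.subtype t (by simp)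
  refine ⟨ψ.range, fun s hs ↦ ⟨AdjoinRoot.of _ ⟨s, hs⟩, by simp [ψ]⟩,
    ⟨AdjoinRoot.root _, by simp [ψ]⟩, ?_⟩
  rintro _ ⟨x, rfl⟩ hx
  rw [(map_eq_zero_iff (π.comp ψ) (π.comp ψ).injective).1 hx, map_zero]

theorem exists_ringHom_section [CharP k p] [CharP D p] (hπ : Function.Surjective π)
    (hsq : RingHom.ker π ^ 2 = ⊥) : ∃ g : k →+* D, ∀ x, π (g x) = x := by
  have hp : p.Prime := Fact.out
  let 𝒮 : Set (Subring D) := {S | (frobenius D p).range ≤ S ∧ ∀ s ∈ S, π s = 0 → s = 0}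
  have hfrob : (frobenius D p).range ∈ 𝒮 := by
    refine ⟨le_rfl, ?_⟩
    rintro _ ⟨b, rfl⟩ hb
    have hb0 : b ∈ RingHom.ker π := eq_zero_of_pow_eq_zero (by rwa [frobenius_def, map_pow] at hb)
    have hb2 : b ^ 2 = 0 := by simpa only [hsq, Ideal.mem_bot] using Ideal.pow_mem_pow hb0 2
    exact pow_eq_zero_of_le hp.two_le hb2
  obtain ⟨S, -, hSmax⟩ := zorn_le_nonempty₀ 𝒮 (fun c hc hchain y hy ↦ by
    refine ⟨sSup c, ⟨(hc hy).1.trans (le_sSup hy), fun s hs h0 ↦ ?_⟩, fun z hz ↦ le_sSup hz⟩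
    obtain ⟨T, hT, hsT⟩ := (Subring.mem_sSup_of_directedOn ⟨y, hy⟩ hchain.directedOn).1 hs
    exact (hc hT).2 s hsT h0) _ hfrob
  obtain ⟨hS, hinj⟩ : S ∈ 𝒮 := hSmax.prop
  have hsurj : Function.Surjective (π.comp S.subtype) := by
    intro x
    obtain ⟨t, rfl⟩ := hπ x
    by_contra ht
    obtain ⟨T, hST, htT, hT⟩ := exists_subring_of_notMem_map p hπ hinj (fun b ↦ hS ⟨b, rfl⟩)
      (fun ⟨s, hs, hst⟩ ↦ ht ⟨⟨s, hs⟩, hst⟩)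
    exact ht ⟨⟨t, hSmax.le_of_ge ⟨hS.trans hST, hT⟩ hST htT⟩, rfl⟩
  have hinj' : Function.Injective (π.comp S.subtype) :=
    (injective_iff_map_eq_zero _).2 fun s hs ↦ Subtype.ext (hinj s s.2 hs)
  let e := RingEquiv.ofBijective (π.comp S.subtype) ⟨hinj', hsurj⟩
  exact ⟨S.subtype.comp e.symm, e.apply_symm_apply⟩

end SquareZero

theorem formallySmooth_zmod (p : ℕ) [Fact p.Prime] (k : Type*) [Field k] [Algebra (ZMod p) k] :
    Algebra.FormallySmooth (ZMod p) k := by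
  let f : MvPolynomial k (ZMod p) →ₐ[ZMod p] k := MvPolynomial.aeval id
  have hf : Function.Surjective f := fun x ↦ ⟨MvPolynomial.X x, MvPolynomial.aeval_X _ _⟩
  have hπ : Function.Surjective f.kerSquareLift := fun x ↦
    (hf x).imp' (Ideal.Quotient.mk _) fun _ ↦ id
  have : Nontrivial (MvPolynomial k (ZMod p) ⧸ RingHom.ker f.toRingHom ^ 2) := hπ.nontrivial
  have : CharP (MvPolynomial k (ZMod p) ⧸ RingHom.ker f.toRingHom ^ 2) p :=
    charP_of_injective_algebraMap (algebraMap (ZMod p) _).injective p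
  have : CharP k p := charP_of_injective_algebraMap (algebraMap (ZMod p) k).injective p
  obtain ⟨g, hg⟩ := exists_ringHom_section (π := f.kerSquareLift.toRingHom) p hπ
    (by rw [AlgHom.ker_kerSquareLift, Ideal.cotangentIdeal_square])
  refine (Algebra.FormallySmooth.iff_split_surjection f hf).2
    ⟨{ g with commutes' := fun r ↦ ?_ }, AlgHom.ext hg⟩
  exact RingHom.congr_fun (Subsingleton.elim (g.comp (algebraMap (ZMod p) k)) (algebraMap _ _)) r

theorem formallySmooth_of_charZero (K L : Type*) [Field K] [CharZero K] [Field L] [Algebra K L] :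
    Algebra.FormallySmooth K L := by
  obtain ⟨s, hs⟩ := exists_isTranscendenceBasis K L
  have := hs.isAlgebraic_field
  exact .of_algebraicIndependent_of_isSeparable hs.1

theorem exists_algHom_residue_section (F : Type*) [CommRing F] {A : Type*} [CommRing A]
    [IsLocalRing A] [Algebra F A] [IsAdicComplete (maximalIdeal A) A]
    [Algebra.FormallySmooth F (ResidueField A)] :
    ∃ g : ResidueField A →ₐ[F] A, ∀ x, residue A (g x) = x := by
  obtain ⟨g, hg⟩ := Algebra.FormallySmooth.exists_mkₐ_comp_eq_of_isAdicComplete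
    (R := F) (A := ResidueField A) (I := maximalIdeal A) (AlgHom.id F (ResidueField A))
  exact ⟨g, AlgHom.congr_fun hg⟩

theorem exists_residue_section (F : Type*) [Field F] {A : Type*} [CommRing A] [IsLocalRing A]
    [Algebra F A] [IsAdicComplete (maximalIdeal A) A] :
    ∃ g : ResidueField A →+* A, ∀ x, residue A (g x) = x := by
  obtain _ | ⟨p, _, _⟩ := CharP.exists' F
  · have := formallySmooth_of_charZero F (ResidueField A)
    obtain ⟨g, hg⟩ := exists_algHom_residue_section F (A := A)
    exact ⟨g, hg⟩
  · have : CharP A p := charP_of_injective_algebraMap (algebraMap F A).injective p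
    let := ZMod.algebra A p
    have := formallySmooth_zmod p (ResidueField A)
    obtain ⟨g, hg⟩ := exists_algHom_residue_section (ZMod p) (A := A)
    exact ⟨g, hg⟩

end CoefficientField

section QuotientDimension

variable {k : Type*} [Field k]

section Module

variable {V W U : Type*} [AddCommGroup V] [Module k V] [AddCommGroup W] [Module k W]
  [AddCommGroup U] [Module k U] {f : V →ₗ[k] W} {g : V →ₗ[k] U}

theorem exists_surjective_range_of_ker_le (hg : Function.Surjective g)
    (h : LinearMap.ker f ≤ LinearMap.ker g) :
    ∃ T : LinearMap.range f →ₗ[k] U, Function.Surjective T := by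
  refine ⟨(LinearMap.ker f).liftQ g h ∘ₗ f.quotKerEquivRange.symm.toLinearMap, ?_⟩
  have hlift : Function.Surjective ((LinearMap.ker f).liftQ g h) := fun u ↦
    let ⟨v, hv⟩ := hg u
    ⟨Submodule.Quotient.mk v, hv⟩
  exact hlift.comp f.quotKerEquivRange.symm.surjective

theorem finrank_le_finrank_range_of_ker_le [Module.Finite k (LinearMap.range f)]
    (hg : Function.Surjective g) (h : LinearMap.ker f ≤ LinearMap.ker g) :
    Module.finrank k U ≤ Module.finrank k (LinearMap.range f) :=
  let ⟨_, hT⟩ := exists_surjective_range_of_ker_le hg h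
  LinearMap.finrank_le_finrank_of_surjective hT

end Module

variable {Q : Type*} [CommRing Q] [Algebra k Q] {K L : Ideal Q}

theorem finite_quotient_of_le (h : K ≤ L) [Module.Finite k (Q ⧸ K)] : Module.Finite k (Q ⧸ L) :=
  .of_surjective (Ideal.Quotient.factorₐ k h).toLinearMap (Ideal.Quotient.factor_surjective h)

theorem finrank_quotient_le_of_le (h : K ≤ L) [Module.Finite k (Q ⧸ K)] :
    Module.finrank k (Q ⧸ L) ≤ Module.finrank k (Q ⧸ K) :=
  LinearMap.finrank_le_finrank_of_surjective (f := (Ideal.Quotient.factorₐ k h).toLinearMap)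
    (Ideal.Quotient.factor_surjective h)

theorem eq_of_finrank_quotient_eq (h : K ≤ L) [Module.Finite k (Q ⧸ K)]
    (heq : Module.finrank k (Q ⧸ K) = Module.finrank k (Q ⧸ L)) : K = L := by
  have := finite_quotient_of_le (k := k) h
  have hinj : Function.Injective (Ideal.Quotient.factorₐ k h).toLinearMap :=
    (LinearMap.injective_iff_surjective_of_finrank_eq_finrank heq).2
      (Ideal.Quotient.factor_surjective h)
  refine le_antisymm h fun f hf ↦ Ideal.Quotient.eq_zero_iff_mem.1 (hinj ?_)
  exact (Ideal.Quotient.eq_zero_iff_mem.2 hf).trans (map_zero _).symm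

theorem finrank_quotient_sup_span_add_le [Module.Finite k (Q ⧸ K)] (g : Q)
    (h : ∀ f, f * g ∈ K → f ∈ L) :
    Module.finrank k (Q ⧸ K ⊔ Ideal.span {g}) + Module.finrank k (Q ⧸ L) ≤
      Module.finrank k (Q ⧸ K) := by
  let T := (Ideal.Quotient.factorₐ k (le_sup_left : K ≤ K ⊔ Ideal.span {g})).toLinearMap
  have hT : Function.Surjective T := Ideal.Quotient.factor_surjective le_sup_left
  let mulG : Q →ₗ[k] Q ⧸ K := (Ideal.Quotient.mkₐ k K).toLinearMap ∘ₗ LinearMap.mulRight k g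
  have hrange : LinearMap.range mulG ≤ LinearMap.ker T := by
    rintro _ ⟨f, rfl⟩
    exact Ideal.Quotient.eq_zero_iff_mem.2
      (Ideal.mul_mem_left _ f (Ideal.mem_sup_right (Ideal.mem_span_singleton_self g)))
  have hker : LinearMap.ker mulG ≤ LinearMap.ker (Ideal.Quotient.mkₐ k L).toLinearMap :=
    fun f hf ↦ Ideal.Quotient.eq_zero_iff_mem.2 (h f (Ideal.Quotient.eq_zero_iff_mem.1 hf))
  calc Module.finrank k (Q ⧸ K ⊔ Ideal.span {g}) + Module.finrank k (Q ⧸ L)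
      ≤ Module.finrank k (Q ⧸ K ⊔ Ideal.span {g}) + Module.finrank k (LinearMap.range mulG) :=
        Nat.add_le_add_left
          (finrank_le_finrank_range_of_ker_le (Ideal.Quotient.mkₐ_surjective k L) hker) _
    _ ≤ Module.finrank k (LinearMap.range T) + Module.finrank k (LinearMap.ker T) := by
        rw [LinearMap.range_eq_top.2 hT, finrank_top]
        exact Nat.add_le_add_left (Submodule.finrank_mono hrange) _
    _ = Module.finrank k (Q ⧸ K) := LinearMap.finrank_range_add_finrank_ker T

theorem finite_quotient_pow (hK : K.FG) [Module.Finite k (Q ⧸ K)] (n : ℕ) :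
    Module.Finite k (Q ⧸ K ^ n) := by
  obtain rfl | hn := eq_or_ne n 0
  · rw [pow_zero, Ideal.one_eq_top]
    infer_instance
  let φ := Ideal.Quotient.factorₐ k (Ideal.pow_le_self (I := K) hn)
  have hker : RingHom.ker φ = K.map (Ideal.Quotient.mk (K ^ n)) :=
    Ideal.Quotient.factor_ker (Ideal.pow_le_self hn)
  refine Module.finite_of_surjective_of_ker_le_nilradical φ
    (Ideal.Quotient.factor_surjective (Ideal.pow_le_self hn)) ?_ (hker ▸ hK.map _)
  rw [hker, Ideal.map_le_iff_le_comap]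
  refine fun x hx ↦ ⟨n, ?_⟩
  rw [← map_pow]
  exact Ideal.Quotient.eq_zero_iff_mem.2 (Ideal.pow_mem_pow hx n)

end QuotientDimension

section HomogeneousPrimeAvoidance

variable {A S : Type*} [CommRing A] [SetLike S A] [AddSubmonoidClass S A] (𝒜 : ℕ → S)
  [GradedRing 𝒜]

theorem isHomogeneous_of_mem_minimalPrimes {I P : Ideal A} (hI : I.IsHomogeneous 𝒜)
    (hP : P ∈ I.minimalPrimes) : P.IsHomogeneous 𝒜 := by
  have hcore : (P.homogeneousCore 𝒜).toIdeal ≤ P := Ideal.toIdeal_homogeneousCore_le 𝒜 P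
  have hI' : I ≤ (P.homogeneousCore 𝒜).toIdeal :=
    hI.toIdeal_homogeneousCore_eq_self.symm.trans_le (Ideal.homogeneousCore_mono _ hP.1.2)
  exact (Ideal.IsHomogeneous.iff_eq _ _).2
    (le_antisymm hcore (hP.2 ⟨Ideal.IsPrime.homogeneousCore hP.1.1, hI'⟩ hcore))

variable {𝒜}

theorem exists_homogeneous_mem_notMem {I P : Ideal A} (hI : I.IsHomogeneous 𝒜) (h : ¬ I ≤ P) :
    ∃ n, ∃ x ∈ 𝒜 n, x ∈ I ∧ x ∉ P := by
  classical
  obtain ⟨f, hf, hfP⟩ := SetLike.not_le_iff_exists.1 h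
  have hcomp : ∃ n, (DirectSum.decompose 𝒜 f n : A) ∉ P := by
    by_contra! hall
    exact hfP (DirectSum.sum_support_decompose 𝒜 f ▸ Ideal.sum_mem _ fun n _ ↦ hall n)
  obtain ⟨n, hn⟩ := hcomp
  exact ⟨n, _, SetLike.coe_mem _, hI n hf, hn⟩

theorem exists_homogeneous_forall_mem_notMem {s : Finset (Ideal A)} {P : Ideal A} [P.IsPrime]
    (hs : ∀ I ∈ s, I.IsHomogeneous 𝒜) (hle : ∀ I ∈ s, ¬ I ≤ P)
    (hpos : ∃ n, 0 < n ∧ ∃ x ∈ 𝒜 n, x ∉ P) :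
    ∃ n, 0 < n ∧ ∃ x ∈ 𝒜 n, (∀ I ∈ s, x ∈ I) ∧ x ∉ P := by
  classical
  induction s using Finset.induction_on with
  | empty => simpa only [Finset.notMem_empty, IsEmpty.forall_iff, implies_true, true_and] using hpos
  | insert I s _ ih =>
    rw [Finset.forall_mem_insert] at hs hle
    obtain ⟨n, hn, x, hx, hxs, hxP⟩ := ih hs.2 hle.2
    obtain ⟨m, y, hy, hyI, hyP⟩ := exists_homogeneous_mem_notMem hs.1 hle.1
    refine ⟨n + m, by omega, x * y, SetLike.mul_mem_graded hx hy, ?_,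
      fun hxy ↦ (Ideal.IsPrime.mem_or_mem ‹_› hxy).elim hxP hyP⟩
    exact Finset.forall_mem_insert _ _ _ |>.2
      ⟨I.mul_mem_left x hyI, fun J hJ ↦ J.mul_mem_right y (hxs J hJ)⟩

theorem exists_homogeneous_forall_notMem {s : Finset (Ideal A)}
    (hprime : ∀ P ∈ s, P.IsPrime) (hhom : ∀ P ∈ s, P.IsHomogeneous 𝒜)
    (hanti : IsAntichain (· ≤ ·) (s : Set (Ideal A)))
    (hpos : ∀ P ∈ s, ∃ n, 0 < n ∧ ∃ x ∈ 𝒜 n, x ∉ P) :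
    ∃ n, 0 < n ∧ ∃ x ∈ 𝒜 n, ∀ P ∈ s, x ∉ P := by
  classical
  induction s using Finset.induction_on with
  | empty => exact ⟨1, one_pos, 0, zero_mem _, by simp⟩
  | insert P s hPs ih =>
    rw [Finset.coe_insert] at hanti
    rw [Finset.forall_mem_insert] at hprime hhom hpos
    obtain ⟨e, he, g, hg, hgs⟩ := ih hprime.2 hhom.2 (hanti.subset (Set.subset_insert _ _)) hpos.2
    by_cases hgP : g ∉ P
    · exact ⟨e, he, g, hg, (Finset.forall_mem_insert _ _ _).2 ⟨hgP, hgs⟩⟩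
    rw [not_not] at hgP
    have := hprime.1
    have hle : ∀ I ∈ s, ¬ I ≤ P := fun I hI ↦
      hanti (Set.mem_insert_of_mem _ hI) (Set.mem_insert _ _) (ne_of_mem_of_not_mem hI hPs)
    obtain ⟨D, hD, h, hh, hhs, hhP⟩ :=
      exists_homogeneous_forall_mem_notMem hhom.2 hle hpos.1
    -- `g ^ D + h ^ e` works: `g` lies in `P` only, `h` lies in every other prime only.
    refine ⟨D * e, Nat.mul_pos hD he, g ^ D + h ^ e, add_mem (SetLike.pow_mem_graded D hg)
      (mul_comm D e ▸ SetLike.pow_mem_graded e hh), (Finset.forall_mem_insert _ _ _).2 ⟨?_, ?_⟩⟩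
    · rw [Ideal.add_mem_iff_right _ (Ideal.pow_mem_of_mem _ hgP D hD)]
      exact fun hmem ↦ hhP (hprime.1.mem_of_pow_mem _ hmem)
    · intro I hI
      rw [Ideal.add_mem_iff_left _ (Ideal.pow_mem_of_mem _ (hhs I hI) e he)]
      exact fun hmem ↦ hgs I hI ((hprime.2 I hI).mem_of_pow_mem _ hmem)

end HomogeneousPrimeAvoidance

section HilbertFunction

open MvPolynomial

attribute [local instance] MvPolynomial.gradedAlgebra

variable {σ k : Type*}

section CommRing

variable [CommRing k]

theorem homogeneousComponent_add_mul (f : MvPolynomial σ k) {g : MvPolynomial σ k} {e : ℕ}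
    (hg : g.IsHomogeneous e) (n : ℕ) :
    homogeneousComponent (n + e) (f * g) = homogeneousComponent n f * g :=
  (decomposition.decompose'_apply _ _).symm.trans <|
    (DirectSum.coe_decompose_mul_add_of_right_mem (homogeneousSubmodule σ k) hg).trans <|
      congrArg (· * g) (decomposition.decompose'_apply _ _)

theorem homogeneousComponent_mul_of_lt (f : MvPolynomial σ k) {g : MvPolynomial σ k} {e n : ℕ}
    (hg : g.IsHomogeneous e) (hn : n < e) : homogeneousComponent n (f * g) = 0 :=
  (decomposition.decompose'_apply _ _).symm.trans <|
    DirectSum.coe_decompose_mul_of_right_mem_of_not_le (homogeneousSubmodule σ k) hg hn.not_ge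

theorem mem_pow_idealOfVars_of_isHomogeneous {f : MvPolynomial σ k} {m n : ℕ}
    (hf : f.IsHomogeneous n) (h : m ≤ n) : f ∈ idealOfVars σ k ^ m :=
  (mem_pow_idealOfVars_iff' _ _).2 fun _ hx ↦ hf.coeff_eq_zero (by omega)

theorem homogeneousComponent_eq_zero_of_mem_pow {f : MvPolynomial σ k} {m n : ℕ}
    (hf : f ∈ idealOfVars σ k ^ m) (h : n < m) : homogeneousComponent n f = 0 := by
  ext x
  rw [coeff_homogeneousComponent, coeff_zero, ite_eq_right_iff]
  exact fun hx ↦ (mem_pow_idealOfVars_iff' _ _).1 hf x (by omega)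

theorem homogeneousComponent_sub_mem_pow_succ {f : MvPolynomial σ k} {n : ℕ}
    (hf : f ∈ idealOfVars σ k ^ n) :
    homogeneousComponent n f - f ∈ idealOfVars σ k ^ (n + 1) := by
  rw [mem_pow_idealOfVars_iff']
  intro x hx
  rw [coeff_sub, coeff_homogeneousComponent]
  split_ifs with h
  · exact sub_self _
  · rw [(mem_pow_idealOfVars_iff' n f).1 hf x (by omega), sub_zero]

theorem homogeneousComponent_mem_of_mem_sup_pow {𝔞 : Ideal (MvPolynomial σ k)}
    (hhom : 𝔞.IsHomogeneous (homogeneousSubmodule σ k)) {f : MvPolynomial σ k} {m n : ℕ}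
    (hf : f ∈ 𝔞 ⊔ idealOfVars σ k ^ m) (h : n < m) : homogeneousComponent n f ∈ 𝔞 := by
  obtain ⟨u, hu, v, hv, rfl⟩ := Submodule.mem_sup.1 hf
  rw [map_add, homogeneousComponent_eq_zero_of_mem_pow hv h, add_zero]
  exact homogeneousComponent_mem_of_mem hhom hu n

theorem pow_idealOfVars_le_of_le_sup_pow_succ {𝔞 : Ideal (MvPolynomial σ k)}
    (hhom : 𝔞.IsHomogeneous (homogeneousSubmodule σ k)) {n : ℕ}
    (h : idealOfVars σ k ^ n ≤ 𝔞 ⊔ idealOfVars σ k ^ (n + 1)) : idealOfVars σ k ^ n ≤ 𝔞 := by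
  rw [pow_idealOfVars_eq_span, Ideal.span_le]
  rintro _ ⟨x, hx, rfl⟩
  have hmon : (monomial x (1 : k)).IsHomogeneous n := isHomogeneous_monomial _ hx
  have hmem := h (mem_pow_idealOfVars_of_isHomogeneous hmon le_rfl)
  change monomial x (1 : k) ∈ 𝔞
  rw [← homogeneousComponent_eq_self hmon]
  exact homogeneousComponent_mem_of_mem_sup_pow hhom hmem n.lt_succ_self

theorem mem_sup_pow_of_mul_mem_sup_pow {𝔞 : Ideal (MvPolynomial σ k)}
    (hhom : 𝔞.IsHomogeneous (homogeneousSubmodule σ k)) {f g : MvPolynomial σ k} {e m : ℕ}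
    (hg : g.IsHomogeneous e) (hnzd : ∀ f, f * g ∈ 𝔞 → f ∈ 𝔞)
    (hf : f * g ∈ 𝔞 ⊔ idealOfVars σ k ^ (m + e)) : f ∈ 𝔞 ⊔ idealOfVars σ k ^ m := by
  rw [← sum_homogeneousComponent f]
  refine Ideal.sum_mem _ fun j _ ↦ ?_
  obtain hj | hj := le_or_gt m j
  · exact Ideal.mem_sup_right
      (mem_pow_idealOfVars_of_isHomogeneous (homogeneousComponent_isHomogeneous j f) hj)
  · refine Ideal.mem_sup_left (hnzd _ ?_)
    rw [← homogeneousComponent_add_mul f hg]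
    exact homogeneousComponent_mem_of_mem_sup_pow hhom hf (Nat.add_lt_add_right hj e)

end CommRing

variable [Field k]

theorem le_idealOfVars_of_isHomogeneous {P : Ideal (MvPolynomial σ k)}
    (hhom : P.IsHomogeneous (homogeneousSubmodule σ k)) (hP : P ≠ ⊤) : P ≤ idealOfVars σ k := by
  intro f hf
  have h0 := homogeneousComponent_mem_of_mem hhom hf 0
  rw [homogeneousComponent_zero] at h0
  have hc : coeff 0 f = 0 := by
    by_contra hne
    exact hP (Ideal.eq_top_of_isUnit_mem _ h0 ((IsUnit.mk0 _ hne).map C))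
  rw [← pow_one (idealOfVars σ k), mem_pow_idealOfVars_iff']
  intro x hx
  rwa [(Finsupp.degree_eq_zero_iff x).1 (Nat.lt_one_iff.1 hx)]

variable [Finite σ]

theorem exists_isHomogeneous_forall_mem_of_mul_mem {𝔞 : Ideal (MvPolynomial σ k)}
    (hhom : 𝔞.IsHomogeneous (homogeneousSubmodule σ k)) (hrad : 𝔞.IsRadical)
    (h : ¬ idealOfVars σ k ≤ 𝔞) :
    ∃ e, 0 < e ∧ ∃ g : MvPolynomial σ k, g.IsHomogeneous e ∧ ∀ f, f * g ∈ 𝔞 → f ∈ 𝔞 := by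
  have hfin : 𝔞.minimalPrimes.Finite := Ideal.finite_minimalPrimes_of_isNoetherianRing _ 𝔞
  have hinf : sInf 𝔞.minimalPrimes = 𝔞 := by rw [Ideal.sInf_minimalPrimes, hrad.radical]
  have hPhom : ∀ P ∈ 𝔞.minimalPrimes, P.IsHomogeneous (homogeneousSubmodule σ k) :=
    fun P hP ↦ isHomogeneous_of_mem_minimalPrimes _ hhom hP
  have hnot : ∀ P ∈ 𝔞.minimalPrimes, ¬ idealOfVars σ k ≤ P := by
    refine fun P hP hc ↦ h (hinf ▸ le_sInf fun P' hP' ↦ hc.trans (hP.2 hP'.1 ?_))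
    exact (le_idealOfVars_of_isHomogeneous (hPhom P' hP') hP'.1.1.ne_top).trans hc
  have hX : ∀ P ∈ 𝔞.minimalPrimes, ∃ n, 0 < n ∧ ∃ x ∈ homogeneousSubmodule σ k n, x ∉ P := by
    intro P hP
    by_contra! hall
    refine hnot P hP (Ideal.span_le.2 ?_)
    rintro _ ⟨i, rfl⟩
    exact hall 1 one_pos _ (isHomogeneous_X k i)
  obtain ⟨e, he, g, hg, hgP⟩ := exists_homogeneous_forall_notMem (s := hfin.toFinset)
    (𝒜 := homogeneousSubmodule σ k)
    (fun P hP ↦ (hfin.mem_toFinset.1 hP).1.1) (fun P hP ↦ hPhom P (hfin.mem_toFinset.1 hP))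
    (hfin.coe_toFinset.symm ▸ setOfPred_minimal_antichain _)
    (fun P hP ↦ hX P (hfin.mem_toFinset.1 hP))
  refine ⟨e, he, g, hg, fun f hf ↦ ?_⟩
  rw [← hinf, Submodule.mem_sInf] at hf ⊢
  exact fun P hP ↦ (hP.1.1.mem_or_mem (hf P hP)).resolve_right (hgP P (hfin.mem_toFinset.2 hP))

/-- The cumulative Hilbert function of `k[σ] / 𝔞`: for homogeneous `𝔞`, its value at `n` is the
number of linearly independent residues of degree less than `n`. -/
noncomputable def cumulativeHilbert (𝔞 : Ideal (MvPolynomial σ k)) (n : ℕ) : ℕ :=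
  Module.finrank k (MvPolynomial σ k ⧸ 𝔞 ⊔ idealOfVars σ k ^ n)

instance finite_quotient_idealOfVars : Module.Finite k (MvPolynomial σ k ⧸ idealOfVars σ k) := by
  refine .of_surjective (Algebra.linearMap k (MvPolynomial σ k ⧸ idealOfVars σ k)) fun x ↦ ?_
  obtain ⟨f, rfl⟩ := Ideal.Quotient.mk_surjective x
  refine ⟨coeff 0 f, Ideal.Quotient.eq.2 ?_⟩
  rw [← pow_one (idealOfVars σ k), mem_pow_idealOfVars_iff']
  intro x hx
  rw [(Finsupp.degree_eq_zero_iff x).1 (Nat.lt_one_iff.1 hx), coeff_sub]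
  exact sub_eq_zero.2 (coeff_zero_C _)

instance finite_quotient_sup_pow_idealOfVars (𝔞 : Ideal (MvPolynomial σ k)) (n : ℕ) :
    Module.Finite k (MvPolynomial σ k ⧸ 𝔞 ⊔ idealOfVars σ k ^ n) :=
  have := finite_quotient_pow (k := k) (idealOfVars_fg σ k) n
  finite_quotient_of_le le_sup_right

theorem cumulativeHilbert_mono (𝔞 : Ideal (MvPolynomial σ k)) : Monotone (cumulativeHilbert 𝔞) :=
  fun _ _ h ↦ finrank_quotient_le_of_le (sup_le_sup_left (Ideal.pow_le_pow_right h) _)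

theorem cumulativeHilbert_le_of_le {𝔞 𝔟 : Ideal (MvPolynomial σ k)} (h : 𝔞 ≤ 𝔟) (n : ℕ) :
    cumulativeHilbert 𝔟 n ≤ cumulativeHilbert 𝔞 n :=
  finrank_quotient_le_of_le (sup_le_sup_right h _)

variable {𝔞 : Ideal (MvPolynomial σ k)} (hhom : 𝔞.IsHomogeneous (homogeneousSubmodule σ k))

include hhom

theorem idealOfVars_le_radical_of_bounded {c : ℕ} (hb : ∀ n, cumulativeHilbert 𝔞 n ≤ c) :
    idealOfVars σ k ≤ 𝔞.radical := by
  obtain ⟨n, hn⟩ : ∃ n, cumulativeHilbert 𝔞 n = cumulativeHilbert 𝔞 (n + 1) := by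
    by_contra! hne
    have hmono : StrictMono (cumulativeHilbert 𝔞) := strictMono_nat_of_lt_succ fun n ↦
      (cumulativeHilbert_mono 𝔞 n.le_succ).lt_of_ne (hne n)
    exact absurd ((hmono.le_apply (x := c + 1)).trans (hb _)) (Nat.not_succ_le_self c)
  have heq : 𝔞 ⊔ idealOfVars σ k ^ (n + 1) = 𝔞 ⊔ idealOfVars σ k ^ n :=
    eq_of_finrank_quotient_eq (k := k) (sup_le_sup_left (Ideal.pow_le_pow_right n.le_succ) _)
      hn.symm
  have hle := pow_idealOfVars_le_of_le_sup_pow_succ hhom (heq.symm ▸ le_sup_right)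
  exact fun f hf ↦ ⟨n, hle (Ideal.pow_mem_pow hf n)⟩

variable {g : MvPolynomial σ k} {e : ℕ} (hg : g.IsHomogeneous e)
  (hnzd : ∀ f, f * g ∈ 𝔞 → f ∈ 𝔞)

include hg hnzd

theorem cumulativeHilbert_sup_span_add_le (m : ℕ) :
    cumulativeHilbert (𝔞 ⊔ Ideal.span {g}) (m + e) + cumulativeHilbert 𝔞 m ≤
      cumulativeHilbert 𝔞 (m + e) := by
  have := finrank_quotient_sup_span_add_le (k := k) (K := 𝔞 ⊔ idealOfVars σ k ^ (m + e))
    (L := 𝔞 ⊔ idealOfVars σ k ^ m) g fun _ ↦ mem_sup_pow_of_mul_mem_sup_pow hhom hg hnzd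
  rwa [sup_right_comm] at this

theorem mul_cumulativeHilbert_sup_span_le (m j : ℕ) :
    j * cumulativeHilbert (𝔞 ⊔ Ideal.span {g}) m ≤ cumulativeHilbert 𝔞 (m + j * e) := by
  induction j with
  | zero => simp
  | succ j ih =>
    have hstep := cumulativeHilbert_sup_span_add_le hhom hg hnzd (m + j * e)
    have hmono : cumulativeHilbert (𝔞 ⊔ Ideal.span {g}) m ≤ _ :=
      cumulativeHilbert_mono _ (by omega : m ≤ m + j * e + e)
    rw [Nat.succ_mul j e, ← add_assoc, Nat.succ_mul]
    omega

theorem cumulativeHilbert_sup_span_le_of_le {c d : ℕ}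
    (hb : ∀ n, cumulativeHilbert 𝔞 n ≤ c * n ^ (d + 1)) (n : ℕ) :
    cumulativeHilbert (𝔞 ⊔ Ideal.span {g}) n ≤ c * (1 + e) ^ (d + 1) * n ^ d := by
  obtain rfl | hn := n.eq_zero_or_pos
  · simp [cumulativeHilbert, Module.finrank_zero_of_subsingleton]
  refine Nat.le_of_mul_le_mul_left ?_ hn
  calc n * cumulativeHilbert (𝔞 ⊔ Ideal.span {g}) n
      ≤ c * (n + n * e) ^ (d + 1) :=
        (mul_cumulativeHilbert_sup_span_le hhom hg hnzd n n).trans (hb _)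
    _ = n * (c * (1 + e) ^ (d + 1) * n ^ d) := by
        rw [show n + n * e = n * (1 + e) by ring, mul_pow]
        ring

end HilbertFunction

section HomogeneousParameters

open MvPolynomial

attribute [local instance] MvPolynomial.gradedAlgebra

variable {σ k : Type*} [Field k] [Finite σ] {𝔞 : Ideal (MvPolynomial σ k)}

theorem exists_isHomogeneous_idealOfVars_le_radical
    (hhom : 𝔞.IsHomogeneous (homogeneousSubmodule σ k)) {c d : ℕ}
    (hb : ∀ n, cumulativeHilbert 𝔞 n ≤ c * n ^ d) :
    ∃ (g : Fin d → MvPolynomial σ k) (e : Fin d → ℕ), (∀ i, 0 < e i) ∧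
      (∀ i, (g i).IsHomogeneous (e i)) ∧
      idealOfVars σ k ≤ (𝔞 ⊔ Ideal.span (Set.range g)).radical := by
  induction d generalizing 𝔞 c with
  | zero =>
    have hrad := idealOfVars_le_radical_of_bounded hhom (by simpa only [pow_zero, mul_one] using hb)
    exact ⟨finZeroElim, finZeroElim, finZeroElim, finZeroElim,
      hrad.trans (Ideal.radical_mono le_sup_left)⟩
  | succ d ih =>
    by_cases hM : idealOfVars σ k ≤ 𝔞.radical
    · exact ⟨fun _ ↦ 0, fun _ ↦ 1, fun _ ↦ one_pos, fun _ ↦ isHomogeneous_zero _ _ _,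
        hM.trans (Ideal.radical_mono le_sup_left)⟩
    obtain ⟨e₀, he₀, g₀, hg₀, hnzd⟩ :=
      exists_isHomogeneous_forall_mem_of_mul_mem hhom.radical 𝔞.radical_isRadical hM
    have hb' := cumulativeHilbert_sup_span_le_of_le hhom.radical hg₀ hnzd fun n ↦
      (cumulativeHilbert_le_of_le Ideal.le_radical n).trans (hb n)
    have hhom' : (𝔞.radical ⊔ Ideal.span {g₀}).IsHomogeneous (homogeneousSubmodule σ k) :=
      hhom.radical.sup (Ideal.homogeneous_span _ _ (by rintro _ rfl; exact ⟨e₀, hg₀⟩))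
    obtain ⟨g, e, he, hg, hr⟩ := ih hhom' hb'
    refine ⟨Fin.cons g₀ g, Fin.cons e₀ e, Fin.cases he₀ he, Fin.cases hg₀ hg, hr.trans ?_⟩
    rw [Ideal.radical_le_radical_iff, Fin.range_cons, Set.insert_eq, Ideal.span_union]
    exact sup_le (sup_le (Ideal.radical_mono le_sup_left)
      ((le_sup_left.trans le_sup_right).trans Ideal.le_radical))
      ((le_sup_right.trans le_sup_right).trans Ideal.le_radical)

theorem exists_isHomogeneous_pow_idealOfVars_le
    (hhom : 𝔞.IsHomogeneous (homogeneousSubmodule σ k)) {c d : ℕ}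
    (hb : ∀ n, cumulativeHilbert 𝔞 n ≤ c * n ^ d) :
    ∃ N, 0 < N ∧ ∃ g : Fin d → MvPolynomial σ k, (∀ i, (g i).IsHomogeneous N) ∧
      ∃ m, idealOfVars σ k ^ m ≤ 𝔞 ⊔ Ideal.span (Set.range g) := by
  obtain ⟨g, e, he, hg, hr⟩ := exists_isHomogeneous_idealOfVars_le_radical hhom hb
  have hdiv : ∀ i, e i * ∏ j ∈ Finset.univ.erase i, e j = ∏ j, e j := fun i ↦
    Finset.mul_prod_erase _ _ (Finset.mem_univ i)
  refine ⟨∏ j, e j, Finset.prod_pos fun i _ ↦ he i,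
    fun i ↦ g i ^ ∏ j ∈ Finset.univ.erase i, e j, fun i ↦ hdiv i ▸ (hg i).pow _, ?_⟩
  refine Ideal.exists_pow_le_of_le_radical_of_fg (hr.trans ?_) (idealOfVars_fg σ k)
  rw [Ideal.radical_le_radical_iff]
  refine sup_le (le_sup_left.trans Ideal.le_radical) (Ideal.span_le.2 ?_)
  rintro _ ⟨i, rfl⟩
  exact ⟨_, Ideal.mem_sup_right (Ideal.subset_span ⟨i, rfl⟩)⟩

end HomogeneousParameters

section Reduction

open MvPolynomial

attribute [local instance] MvPolynomial.gradedAlgebra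

theorem finrank_add_finrank_le_of_ker_le {k X X' Y Y' W : Type*} [Field k]
    [AddCommGroup X] [Module k X] [Module.Finite k X] [AddCommGroup X'] [Module k X']
    [AddCommGroup Y] [Module k Y] [Module.Finite k Y] [AddCommGroup Y'] [Module k Y']
    [AddCommGroup W] [Module k W] {T : X →ₗ[k] X'} {T' : Y →ₗ[k] Y'} {U : W →ₗ[k] X}
    {V : W →ₗ[k] Y} (hT : Function.Surjective T) (hT' : Function.Surjective T')
    (hTU : LinearMap.ker T ≤ LinearMap.range U) (hVT : LinearMap.range V ≤ LinearMap.ker T')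
    (hVU : LinearMap.ker V ≤ LinearMap.ker U) :
    Module.finrank k X + Module.finrank k Y' ≤ Module.finrank k X' + Module.finrank k Y := by
  have hUV : Module.finrank k (LinearMap.range U) ≤ Module.finrank k (LinearMap.range V) :=
    finrank_le_finrank_range_of_ker_le U.surjective_rangeRestrict (by rwa [U.ker_rangeRestrict])
  have hX := T.finrank_range_add_finrank_ker
  have hY := T'.finrank_range_add_finrank_ker
  rw [LinearMap.range_eq_top.2 hT, finrank_top] at hX
  rw [LinearMap.range_eq_top.2 hT', finrank_top] at hY
  have h₁ := Submodule.finrank_mono hTU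
  have h₂ := Submodule.finrank_mono hVT
  omega

variable {k σ A : Type*} [Field k] [CommRing A] [Algebra k A] {a : σ → A}

theorem aeval_mem_pow_span_range (a : σ → A) {f : MvPolynomial σ k} {n : ℕ}
    (hf : f.IsHomogeneous n) : aeval a f ∈ Ideal.span (Set.range a) ^ n := by
  rw [Ideal.mem_span_pow_iff_exists_isHomogeneous]
  exact ⟨map (algebraMap k A) f, hf.map _, by rw [eval_map, aeval_def]⟩

theorem aeval_homogeneousComponent_mem_of_mem_span {K : ℕ → Ideal A}
    (hK : ∀ i e, Ideal.span (Set.range a) ^ i * K e ≤ K (i + e)) {G : Set (MvPolynomial σ k)}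
    (hG : ∀ g ∈ G, ∃ e, g.IsHomogeneous e ∧ aeval a g ∈ K e) {f : MvPolynomial σ k}
    (hf : f ∈ Ideal.span G) (n : ℕ) : aeval a (homogeneousComponent n f) ∈ K n := by
  induction hf using Submodule.closure_induction with
  | zero => simp only [map_zero, zero_mem]
  | add x y _ _ hx hy => simpa only [map_add] using add_mem hx hy
  | smul_mem r g hg =>
    obtain ⟨e, he, hge⟩ := hG g hg
    rw [smul_eq_mul]
    obtain h | h := le_or_gt e n
    · obtain ⟨i, rfl⟩ := Nat.exists_eq_add_of_le' h
      rw [homogeneousComponent_add_mul r he i, map_mul]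
      exact hK i e (Ideal.mul_mem_mul
        (aeval_mem_pow_span_range a (homogeneousComponent_isHomogeneous i r)) hge)
    · rw [homogeneousComponent_mul_of_lt r he h, map_zero]
      exact zero_mem _

theorem pow_span_range_le_of_pow_idealOfVars_le {K : ℕ → Ideal A}
    (hK : ∀ i e, Ideal.span (Set.range a) ^ i * K e ≤ K (i + e)) {G : Set (MvPolynomial σ k)}
    (hG : ∀ g ∈ G, ∃ e, g.IsHomogeneous e ∧ aeval a g ∈ K e) {m n : ℕ}
    (hm : idealOfVars σ k ^ m ≤ Ideal.span G) (hn : m ≤ n) :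
    Ideal.span (Set.range a) ^ n ≤ K n := by
  intro x hx
  obtain ⟨q, hq, rfl⟩ := (Ideal.mem_span_pow_iff_exists_isHomogeneous _ _).1 hx
  rw [eval_eq]
  refine Ideal.sum_mem _ fun u hu ↦ Ideal.mul_mem_left _ _ ?_
  have hdeg : u.degree = n := by
    by_contra hne
    exact mem_support_iff.1 hu (hq.coeff_eq_zero hne)
  have hmon : (monomial u (1 : k)).IsHomogeneous n := isHomogeneous_monomial _ hdeg
  have := aeval_homogeneousComponent_mem_of_mem_span hK hG
    (hm (mem_pow_idealOfVars_of_isHomogeneous hmon hn)) n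
  rwa [homogeneousComponent_eq_self hmon, aeval_monomial, map_one, one_mul, Finsupp.prod] at this

/-- The ideal of relations over `k` between the classes of the `a i` in the associated graded ring
of `I = (a i)`: it is generated by the forms of some degree `n` whose value at `a` lies in
`I ^ (n + 1)`. -/
noncomputable def initialRelations (k : Type*) [Field k] [Algebra k A] (a : σ → A) :
    Ideal (MvPolynomial σ k) :=
  Ideal.span {g | ∃ n, g.IsHomogeneous n ∧ aeval a g ∈ Ideal.span (Set.range a) ^ (n + 1)}

theorem isHomogeneous_initialRelations (k : Type*) [Field k] [Algebra k A] (a : σ → A) :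
    (initialRelations k a).IsHomogeneous (homogeneousSubmodule σ k) :=
  Ideal.homogeneous_span _ _ fun _ ⟨n, hn, _⟩ ↦ ⟨n, hn⟩

theorem cumulativeHilbert_initialRelations_le [Finite σ]
    (hfin : ∀ n, Module.Finite k (A ⧸ Ideal.span (Set.range a) ^ n)) (n : ℕ) :
    cumulativeHilbert (initialRelations k a) n ≤
      Module.finrank k (A ⧸ Ideal.span (Set.range a) ^ n) := by
  induction n with
  | zero => simp [cumulativeHilbert, Module.finrank_zero_of_subsingleton]
  | succ n ih =>
    have hle : initialRelations k a ⊔ idealOfVars σ k ^ (n + 1) ≤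
        initialRelations k a ⊔ idealOfVars σ k ^ n :=
      sup_le_sup_left (Ideal.pow_le_pow_right n.le_succ) _
    have hle' : Ideal.span (Set.range a) ^ (n + 1) ≤ Ideal.span (Set.range a) ^ n :=
      Ideal.pow_le_pow_right n.le_succ
    have h := finrank_add_finrank_le_of_ker_le
      (T := (Ideal.Quotient.factorₐ k hle).toLinearMap)
      (T' := (Ideal.Quotient.factorₐ k hle').toLinearMap)
      (U := (Ideal.Quotient.mkₐ k _).toLinearMap ∘ₗ (homogeneousSubmodule σ k n).subtype)
      (V := (Ideal.Quotient.mkₐ k _).toLinearMap ∘ₗ (aeval a).toLinearMap ∘ₗ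
        (homogeneousSubmodule σ k n).subtype)
      (Ideal.Quotient.factor_surjective hle) (Ideal.Quotient.factor_surjective hle') ?_ ?_ ?_
    · unfold cumulativeHilbert at ih ⊢
      omega
    · intro x hx
      obtain ⟨f, rfl⟩ := Ideal.Quotient.mk_surjective x
      obtain ⟨u, hu, v, hv, rfl⟩ := Submodule.mem_sup.1 (Ideal.Quotient.eq_zero_iff_mem.1 hx)
      refine ⟨⟨homogeneousComponent n v, homogeneousComponent_mem n v⟩, Ideal.Quotient.eq.2 ?_⟩
      change homogeneousComponent n v - (u + v) ∈ _
      rw [show homogeneousComponent n v - (u + v) = -u + (homogeneousComponent n v - v) by ring]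
      exact Submodule.add_mem_sup (neg_mem hu) (homogeneousComponent_sub_mem_pow_succ hv)
    · rintro _ ⟨f, rfl⟩
      exact Ideal.Quotient.eq_zero_iff_mem.2 (aeval_mem_pow_span_range a f.2)
    · exact fun f hf ↦ Ideal.Quotient.eq_zero_iff_mem.2 (Ideal.mem_sup_left
        (Ideal.subset_span ⟨n, f.2, Ideal.Quotient.eq_zero_iff_mem.1 hf⟩))

theorem pow_le_span_mul_pow_sub {I : Ideal A} (ha : Ideal.span (Set.range a) = I)
    (hfg : I.FG) (hI : I ≤ Ideal.jacobson ⊥) {ι : Type*} {g : ι → MvPolynomial σ k} {N m : ℕ}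
    (hg : ∀ i, (g i).IsHomogeneous N)
    (hm : idealOfVars σ k ^ m ≤ initialRelations k a ⊔ Ideal.span (Set.range g)) {n : ℕ}
    (hn : m ≤ n) : I ^ n ≤ Ideal.span (Set.range fun i ↦ aeval a (g i)) * I ^ (n - N) := by
  subst ha
  set I := Ideal.span (Set.range a)
  set J := Ideal.span (Set.range fun i ↦ aeval a (g i))
  let K : ℕ → Ideal A := fun n ↦ I ^ (n + 1) ⊔ J * I ^ (n - N)
  have hK : ∀ i e, I ^ i * K e ≤ K (i + e) := by
    intro i e
    rw [Ideal.mul_sup, ← pow_add, ← mul_assoc, mul_comm (I ^ i) J, mul_assoc, ← pow_add]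
    exact sup_le_sup (Ideal.pow_le_pow_right (by omega))
      (Ideal.mul_mono_right (Ideal.pow_le_pow_right (by omega)))
  rw [initialRelations, ← Ideal.span_union] at hm
  have hIK : I ^ n ≤ K n := by
    refine pow_span_range_le_of_pow_idealOfVars_le hK ?_ hm hn
    rintro f (⟨e, he, hf⟩ | ⟨i, rfl⟩)
    · exact ⟨e, he, Ideal.mem_sup_left hf⟩
    · refine ⟨N, hg i, Ideal.mem_sup_right ?_⟩
      rw [Nat.sub_self, pow_zero, mul_one]
      exact Ideal.subset_span ⟨i, rfl⟩
  refine Submodule.le_of_le_smul_of_le_jacobson_bot (hfg.pow) hI ?_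
  rwa [smul_eq_mul, ← pow_succ', sup_comm]

theorem exists_pow_le_pow_span_range {I : Ideal A} (hfg : I.FG) (hI : I ≤ Ideal.jacobson ⊥)
    (hfin : ∀ n, Module.Finite k (A ⧸ I ^ n)) {c d : ℕ}
    (hb : ∀ n, Module.finrank k (A ⧸ I ^ n) ≤ c * n ^ d) :
    ∃ N, 0 < N ∧ ∃ y : Fin d → A, (∀ i, y i ∈ I ^ N) ∧
      ∃ m, ∀ n, I ^ (N * (n + m)) ≤ Ideal.span (Set.range y) ^ n := by
  obtain ⟨s, a, ha⟩ := Submodule.fg_iff_exists_fin_generating_family.1 hfg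
  change Ideal.span (Set.range a) = I at ha
  obtain ⟨N, hN, g, hg, m, hm⟩ := exists_isHomogeneous_pow_idealOfVars_le
    (isHomogeneous_initialRelations k a)
    fun n ↦ (cumulativeHilbert_initialRelations_le (ha ▸ hfin) n).trans (ha ▸ hb n)
  refine ⟨N, hN, fun i ↦ aeval a (g i), fun i ↦ ha ▸ aeval_mem_pow_span_range a (hg i), m,
    fun n ↦ ?_⟩
  set J := Ideal.span (Set.range fun i ↦ aeval a (g i))
  have hpow : I ^ (m + N * n) ≤ J ^ n := by
    induction n with
    | zero => simp
    | succ n ih =>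
      refine (pow_le_span_mul_pow_sub ha hfg hI hg hm (Nat.le_add_right m _)).trans ?_
      rw [show m + N * (n + 1) - N = m + N * n by rw [mul_add]; omega, pow_succ']
      exact Ideal.mul_mono_right ih
  refine (Ideal.pow_le_pow_right ?_).trans hpow
  rw [mul_add, add_comm]
  exact Nat.add_le_add_left (Nat.le_mul_of_pos_left m hN) _

end Reduction

section CompleteIntegralClosure

open PowerSeries
open scoped nonZeroDivisors

section AlmostIntegral

variable {R S : Type*} [CommRing R] [IsDomain R] [CommRing S] [Algebra R S]

theorem isAlmostIntegral_coeff_of_forall_lt {p : S⟦X⟧} (hp : IsAlmostIntegral R⟦X⟧ p) {i : ℕ}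
    (hi : ∀ j < i, coeff j p = 0) : IsAlmostIntegral R (coeff i p) := by
  obtain ⟨c, hc, hcp⟩ := hp
  obtain ⟨q, rfl⟩ := X_pow_dvd_iff.2 hi
  have hr : constantCoeff (divXPowOrder c) ≠ 0 :=
    constantCoeff_divXPowOrder_eq_zero_iff.not.2 (nonZeroDivisors.ne_zero hc)
  refine ⟨_, mem_nonZeroDivisors_of_ne_zero hr, fun n ↦ ?_⟩
  obtain ⟨t, ht⟩ := hcp n
  refine ⟨coeff (c.order.toNat + i * n) t, ?_⟩
  have hlead : ∀ (m : ℕ) (u : S⟦X⟧), coeff m (X ^ m * u) = constantCoeff u := fun m u ↦ by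
    rw [coeff_X_pow_mul', if_pos le_rfl, Nat.sub_self, coeff_zero_eq_constantCoeff]
  have hc' : PowerSeries.map (algebraMap R S) c =
      X ^ c.order.toNat * PowerSeries.map (algebraMap R S) (divXPowOrder c) := by
    conv_lhs => rw [← X_pow_order_mul_divXPowOrder (f := c), map_mul, map_pow, map_X]
  have hfactor : PowerSeries.map (algebraMap R S) t = X ^ (c.order.toNat + i * n) *
      (PowerSeries.map (algebraMap R S) (divXPowOrder c) * q ^ n) := by
    rw [← algebraMap_apply'', ht, Algebra.smul_def, algebraMap_apply'', hc']
    ring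
  rw [← coeff_map, hfactor, hlead, hlead, Algebra.smul_def, map_mul, map_pow,
    ← coeff_zero_eq_constantCoeff_apply, coeff_map, coeff_zero_eq_constantCoeff_apply]

theorem isAlmostIntegral_C {s : S} (hs : IsAlmostIntegral R s) : IsAlmostIntegral R⟦X⟧ (C s) := by
  obtain ⟨r, hr, hrs⟩ := hs
  refine ⟨C r, mem_nonZeroDivisors_of_ne_zero
    ((map_ne_zero_iff C C_injective).2 (nonZeroDivisors.ne_zero hr)), fun n ↦ ?_⟩
  obtain ⟨t, ht⟩ := hrs n
  refine ⟨C t, ?_⟩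
  rw [algebraMap_apply'', map_C, ht, Algebra.smul_def, Algebra.smul_def, algebraMap_apply'', map_C,
    map_mul, map_pow]

theorem isAlmostIntegral_coeff {p : S⟦X⟧} (hp : IsAlmostIntegral R⟦X⟧ p) (i : ℕ) :
    IsAlmostIntegral R (coeff i p) := by
  induction i using Nat.strong_induction_on with
  | _ i ih =>
    let low : S⟦X⟧ := ∑ j ∈ Finset.range i, C (coeff j p) * X ^ j
    have hcoeff : ∀ j, coeff j low = if j < i then coeff j p else 0 := fun j ↦ by
      simp only [low, map_sum, coeff_C_mul, coeff_X_pow, mul_ite, mul_one, mul_zero,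
        Finset.sum_ite_eq, Finset.mem_range]
    have hX : (X : S⟦X⟧) ∈ completeIntegralClosure R⟦X⟧ S⟦X⟧ := by
      rw [← map_X (algebraMap R S), ← algebraMap_apply'']
      exact algebraMap_mem _ _
    have hlow : low ∈ completeIntegralClosure R⟦X⟧ S⟦X⟧ := sum_mem fun j hj ↦
      mul_mem (isAlmostIntegral_C (ih j (Finset.mem_range.1 hj))) (pow_mem hX j)
    have := isAlmostIntegral_coeff_of_forall_lt (sub_mem hp hlow : p - low ∈ _) fun j hj ↦ by
      rw [map_sub, hcoeff, if_pos hj, sub_self]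
    rwa [map_sub, hcoeff, if_neg (lt_irrefl i), sub_zero] at this

end AlmostIntegral

/-- A commutative ring is completely integrally closed if a fraction `a / b` all of whose powers
have a common denominator `c` belongs to the ring; the condition is stated without fractions. -/
def IsCompletelyIntegrallyClosed (R : Type*) [CommRing R] : Prop :=
  ∀ a b c : R, b ≠ 0 → c ≠ 0 → (∀ n, b ^ n ∣ c * a ^ n) → b ∣ a

theorem IsCompletelyIntegrallyClosed.of_ringEquiv {R S : Type*} [CommRing R] [CommRing S]
    (e : R ≃+* S) (h : IsCompletelyIntegrallyClosed S) : IsCompletelyIntegrallyClosed R := by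
  intro a b c hb hc hdvd
  refine (map_dvd_iff e).1 (h (e a) (e b) (e c) (e.map_ne_zero_iff.2 hb) (e.map_ne_zero_iff.2 hc)
    fun n ↦ ?_)
  simpa only [map_mul, map_pow] using map_dvd e (hdvd n)

section IsDomain

variable {R : Type*} [CommRing R] [IsDomain R]

theorem isCompletelyIntegrallyClosed_iff (K : Type*) [Field K] [Algebra R K] [IsFractionRing R K] :
    IsCompletelyIntegrallyClosed R ↔ ∀ x : K, IsAlmostIntegral R x → ∃ r, algebraMap R K r = x := by
  have hdvd : ∀ a b : R, b ≠ 0 →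
      (b ∣ a ↔ ∃ r, algebraMap R K r = algebraMap R K a / algebraMap R K b) := by
    intro a b hb
    have hb' : algebraMap R K b ≠ 0 := (FaithfulSMul.algebraMap_eq_zero_iff R K).not.2 hb
    refine exists_congr fun r ↦ ?_
    rw [eq_div_iff hb', ← map_mul, (FaithfulSMul.algebraMap_injective R K).eq_iff, mul_comm,
      eq_comm]
  have hpow : ∀ a b c : R, b ≠ 0 → ∀ n, b ^ n ∣ c * a ^ n ↔
      c • (algebraMap R K a / algebraMap R K b) ^ n ∈ (algebraMap R K).range := by
    intro a b c hb n
    rw [hdvd _ _ (pow_ne_zero n hb), RingHom.mem_range, Algebra.smul_def, div_pow, mul_div_assoc',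
      map_mul, map_pow, map_pow]
  constructor
  · rintro h x ⟨c, hc, hcx⟩
    obtain ⟨a, b, hb, rfl⟩ := IsFractionRing.div_surjective (A := R) x
    have hb := nonZeroDivisors.ne_zero hb
    exact (hdvd a b hb).1
      (h a b c hb (nonZeroDivisors.ne_zero hc) fun n ↦ (hpow a b c hb n).2 (hcx n))
  · exact fun h a b c hb hc hn ↦ (hdvd a b hb).2
      (h _ ⟨c, mem_nonZeroDivisors_of_ne_zero hc, fun n ↦ (hpow a b c hb n).1 (hn n)⟩)

theorem isCompletelyIntegrallyClosed_of_isIntegrallyClosed [IsNoetherianRing R]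
    [IsIntegrallyClosed R] : IsCompletelyIntegrallyClosed R :=
  (isCompletelyIntegrallyClosed_iff (FractionRing R)).2 fun _ hx ↦
    IsIntegrallyClosed.isIntegral_iff.1 hx.isIntegral

theorem IsCompletelyIntegrallyClosed.isIntegrallyClosed (h : IsCompletelyIntegrallyClosed R) :
    IsIntegrallyClosed R :=
  (isIntegrallyClosed_iff (FractionRing R)).2 fun hx ↦
    (isCompletelyIntegrallyClosed_iff (FractionRing R)).1 h _ hx.isAlmostIntegral

theorem IsCompletelyIntegrallyClosed.powerSeries (h : IsCompletelyIntegrallyClosed R) :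
    IsCompletelyIntegrallyClosed R⟦X⟧ := by
  let K := FractionRing R
  have hinj : Function.Injective (PowerSeries.map (algebraMap R K)) :=
    map_injective _ (FaithfulSMul.algebraMap_injective R K)
  intro a b c hb hc hdvd
  have hb' : PowerSeries.map (algebraMap R K) b ≠ 0 := (map_ne_zero_iff _ hinj).2 hb
  obtain ⟨p, hp⟩ : PowerSeries.map (algebraMap R K) b ∣ PowerSeries.map (algebraMap R K) a := by
    refine isCompletelyIntegrallyClosed_of_isIntegrallyClosed _ _ _ hb'
      ((map_ne_zero_iff _ hinj).2 hc) fun n ↦ ?_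
    simpa only [map_mul, map_pow] using map_dvd (PowerSeries.map (algebraMap R K)) (hdvd n)
  have hpint : IsAlmostIntegral R⟦X⟧ p := by
    refine ⟨c, mem_nonZeroDivisors_of_ne_zero hc, fun n ↦ ?_⟩
    obtain ⟨t, ht⟩ := hdvd n
    refine ⟨t, mul_left_cancel₀ (pow_ne_zero n hb') ?_⟩
    rw [algebraMap_apply'', Algebra.smul_def, algebraMap_apply'', ← map_pow, ← map_mul, ← ht,
      map_mul, map_pow, hp, map_pow]
    ring
  choose r hr using fun i ↦
    (isCompletelyIntegrallyClosed_iff K).1 h _ (isAlmostIntegral_coeff hpint i)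
  refine ⟨mk r, hinj ?_⟩
  rw [hp, map_mul]
  congr 1
  ext i
  rw [coeff_map, coeff_mk, hr]

end IsDomain

theorem isCompletelyIntegrallyClosed_mvPowerSeries (k : Type*) [Field k] (d : ℕ) :
    IsCompletelyIntegrallyClosed (MvPowerSeries (Fin d) k) := by
  induction d with
  | zero =>
    exact .of_ringEquiv (MvPowerSeries.isEmptyEquiv (σ := Fin 0) (R := k)).toRingEquiv
      isCompletelyIntegrallyClosed_of_isIntegrallyClosed
  | succ d ih =>
    have := NoZeroDivisors.to_isDomain (MvPowerSeries (Fin d) k)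
    exact .of_ringEquiv (MvPowerSeries.finSuccEquiv k d).toRingEquiv ih.powerSeries

end CompleteIntegralClosure

section MonomialCount

/-- The number of monomials of total degree less than `n` in `d` variables. -/
def monomialCount (d n : ℕ) : ℕ :=
  ∑ i ∈ Finset.range n, d.multichoose i

theorem monotone_monomialCount (d : ℕ) : Monotone (monomialCount d) :=
  fun _ _ h ↦ Finset.sum_le_sum_of_subset (Finset.range_mono h)

theorem monomialCount_succ_eq_multichoose (d n : ℕ) :
    monomialCount d (n + 1) = (d + 1).multichoose n := by
  induction n with
  | zero => simp [monomialCount]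
  | succ n ih =>
    rw [monomialCount, Finset.sum_range_succ, ← monomialCount, ih, Nat.multichoose_succ_succ,
      add_comm]

theorem monomialCount_succ_le_sub_add (d n o : ℕ) :
    monomialCount (d + 1) n ≤ monomialCount (d + 1) (n - o) + o * monomialCount d n := by
  rw [monomialCount, monomialCount, ← Finset.sum_sdiff (Finset.range_mono (n.sub_le o)), add_comm]
  gcongr
  calc ∑ i ∈ Finset.range n \ Finset.range (n - o), (d + 1).multichoose i
      ≤ ∑ _i ∈ Finset.range n \ Finset.range (n - o), monomialCount d n := by
        gcongr with i hi
        rw [← monomialCount_succ_eq_multichoose]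
        simp only [Finset.mem_sdiff, Finset.mem_range] at hi
        exact monotone_monomialCount d hi.1
    _ ≤ o * monomialCount d n := by
        rw [Finset.sum_const, smul_eq_mul, Finset.card_sdiff_of_subset
          (Finset.range_mono (n.sub_le o)), Finset.card_range, Finset.card_range]
        gcongr
        omega

theorem factorial_mul_monomialCount_succ (d n : ℕ) :
    d.factorial * monomialCount d (n + 1) = (n + 1).ascFactorial d := by
  rw [monomialCount_succ_eq_multichoose, Nat.multichoose_eq, Nat.add_right_comm,
    Nat.add_sub_cancel, ← Nat.choose_symm_add, Nat.add_comm d n,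
    Nat.ascFactorial_eq_factorial_mul_choose]

theorem tendsto_monomialCount_div (d : ℕ) :
    Tendsto (fun n ↦ (d.factorial * monomialCount d n : ℝ) / n ^ d) atTop (𝓝 1) := by
  have hlim : Tendsto (fun n : ℕ ↦ (1 + (d : ℝ) / (n + 1 : ℕ)) ^ d) atTop (𝓝 1) := by
    simpa using (((tendsto_add_atTop_iff_nat 1).2
      (tendsto_const_div_atTop_nhds_zero_nat (d : ℝ))).const_add 1).pow d
  rw [← tendsto_add_atTop_iff_nat 1]
  refine tendsto_of_tendsto_of_tendsto_of_le_of_le tendsto_const_nhds hlim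
    (fun n ↦ ?_) (fun n ↦ ?_) <;> dsimp only
  · rw [one_le_div (by positivity)]
    exact_mod_cast (Nat.pow_succ_le_ascFactorial (n + 1) d).trans_eq
      (factorial_mul_monomialCount_succ d n).symm
  · rw [one_add_div (by positivity), div_pow]
    gcongr
    exact_mod_cast (factorial_mul_monomialCount_succ d n).trans_le
      ((Nat.ascFactorial_le_pow_add n d).trans (by gcongr; omega))

end MonomialCount

section VariableIdeal

open MvPowerSeries

/-- The ideal of `R⟦σ⟧` generated by the variables. -/
noncomputable abbrev variableIdeal (σ R : Type*) [CommRing R] : Ideal (MvPowerSeries σ R) :=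
  Ideal.span (Set.range X)

variable {σ : Type*} [Finite σ]

theorem mem_variableIdeal_pow_iff {R : Type*} [CommRing R] {n : ℕ} {f : MvPowerSeries σ R} :
    f ∈ variableIdeal σ R ^ n ↔ ∀ x, Finsupp.degree x < n → coeff x f = 0 := by
  set I := MvPolynomial.idealOfVars σ R
  have hmap : variableIdeal σ R = I.map (algebraMap _ _) := by
    rw [variableIdeal, Ideal.map_span, ← Set.range_comp]
    congr 2
    ext1 i
    exact (MvPolynomial.coe_X (R := R) i).symm
  have hpow : f ∈ variableIdeal σ R ^ n ↔
      f ∈ (I ^ n • ⊤ : Submodule (MvPolynomial σ R) (MvPowerSeries σ R)) := by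
    rw [Ideal.smul_top_eq_map, Ideal.map_pow, ← hmap, Submodule.restrictScalars_mem]
  have hker : f ∈ (I ^ n • ⊤ : Submodule (MvPolynomial σ R) (MvPowerSeries σ R)) ↔
      truncTotal n f ∈ I ^ n := by
    let e := (toAdicCompletionAlgEquiv σ R).toLinearEquiv
    have hmem : e f ∈ (I ^ n • ⊤ : Submodule (MvPolynomial σ R) (MvPowerSeries σ R)).map
        e.toLinearMap ↔ f ∈ (I ^ n • ⊤ : Submodule (MvPolynomial σ R) (MvPowerSeries σ R)) :=
      e.injective.mem_set_image
    rw [← hmem, Submodule.map_smul'', Submodule.map_top, LinearEquiv.range,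
      AdicCompletion.pow_smul_top_eq_ker_eval (MvPolynomial.idealOfVars_fg σ R),
      LinearMap.mem_ker]
    change Ideal.Quotient.mk _ (truncTotal n f) = 0 ↔ _
    rw [Ideal.Quotient.eq_zero_iff_mem, smul_eq_mul, Ideal.mul_top]
  rw [hpow, hker, MvPolynomial.mem_pow_idealOfVars_iff']
  refine forall₂_congr fun x hx ↦ ?_
  rw [coeff_truncTotal _ hx]

theorem mem_variableIdeal_pow_iff_le_order {R : Type*} [CommRing R] {n : ℕ}
    {f : MvPowerSeries σ R} : f ∈ variableIdeal σ R ^ n ↔ (n : ℕ∞) ≤ f.order := by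
  rw [mem_variableIdeal_pow_iff]
  exact ⟨nat_le_order, fun h x hx ↦ coeff_of_lt_order (lt_of_lt_of_le (mod_cast hx) h)⟩

theorem mem_variableIdeal_pow_sub_of_mul_mem {R : Type*} [CommRing R] [IsDomain R] {o n : ℕ}
    {f g : MvPowerSeries σ R} (ho : f.order = o) (h : g * f ∈ variableIdeal σ R ^ n) :
    g ∈ variableIdeal σ R ^ (n - o) := by
  rw [mem_variableIdeal_pow_iff_le_order] at h ⊢
  rw [order_mul, ho] at h
  push_cast
  exact tsub_le_iff_right.2 h

theorem exists_finset_mem_iff_degree_lt (σ : Type*) [Finite σ] (n : ℕ) :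
    ∃ s : Finset (σ →₀ ℕ), (∀ x, x ∈ s ↔ Finsupp.degree x < n) ∧
      s.card = monomialCount (Nat.card σ) n := by
  classical
  have := Fintype.ofFinite σ
  have hdeg (i : ℕ) (x : σ →₀ ℕ) :
      x ∈ Finset.univ.finsuppAntidiag i ↔ Finsupp.degree x = i := by
    rw [Finset.mem_finsuppAntidiag, Finsupp.degree_eq_sum]
    simp
  refine ⟨(Finset.range n).biUnion fun i ↦ Finset.univ.finsuppAntidiag i, fun x ↦ ?_, ?_⟩
  · simp [hdeg]
  · rw [Finset.card_biUnion, monomialCount]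
    · simp only [Finset.card_finsuppAntidiag_nat_eq_multichoose, Finset.card_univ,
        Nat.card_eq_fintype_card]
    · refine fun i _ j _ hij ↦ Finset.disjoint_left.2 fun x hi hj ↦ ?_
      rw [hdeg] at hi hj
      exact hij (hi.symm.trans hj)

variable (σ) (k : Type*) [Field k]

theorem nonempty_quotient_variableIdeal_pow_linearEquiv (n : ℕ) :
    Nonempty ((MvPowerSeries σ k ⧸ variableIdeal σ k ^ n) ≃ₗ[k]
      (Fin (monomialCount (Nat.card σ) n) → k)) := by
  classical
  obtain ⟨s, hs, hcard⟩ := exists_finset_mem_iff_degree_lt σ n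
  let e := s.equivFinOfCardEq hcard
  let f : MvPowerSeries σ k →ₗ[k] Fin (monomialCount (Nat.card σ) n) → k :=
    LinearMap.pi fun i ↦ coeff (e.symm i : σ →₀ ℕ)
  have hsurj : Function.Surjective f := fun v ↦ by
    refine ⟨fun x ↦ if h : x ∈ s then v (e ⟨x, h⟩) else 0, ?_⟩
    ext i
    change (if h : (e.symm i : σ →₀ ℕ) ∈ s then v (e ⟨e.symm i, h⟩) else 0) = v i
    simp
  have hker : LinearMap.ker f = (variableIdeal σ k ^ n).restrictScalars k := by
    ext g
    rw [LinearMap.mem_ker, Submodule.restrictScalars_mem, mem_variableIdeal_pow_iff, funext_iff,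
      ← e.forall_congr_right]
    simp [f, hs]
  exact ⟨(Submodule.Quotient.restrictScalarsEquiv k (variableIdeal σ k ^ n)).symm.trans
    ((Submodule.quotEquivOfEq _ _ hker.symm).trans (f.quotKerEquivOfSurjective hsurj))⟩

theorem finite_quotient_variableIdeal_pow (n : ℕ) :
    Module.Finite k (MvPowerSeries σ k ⧸ variableIdeal σ k ^ n) :=
  let ⟨e⟩ := nonempty_quotient_variableIdeal_pow_linearEquiv σ k n
  .equiv e.symm

theorem finrank_quotient_variableIdeal_pow (n : ℕ) :
    Module.finrank k (MvPowerSeries σ k ⧸ variableIdeal σ k ^ n) =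
      monomialCount (Nat.card σ) n :=
  let ⟨e⟩ := nonempty_quotient_variableIdeal_pow_linearEquiv σ k n
  e.finrank_eq.trans (Module.finrank_fin_fun k)

variable {σ k}

theorem finrank_quotient_variableIdeal_pow_sup_span_add_le {o : ℕ} {f : MvPowerSeries σ k}
    (ho : f.order = o) (n : ℕ) :
    Module.finrank k (MvPowerSeries σ k ⧸ variableIdeal σ k ^ n ⊔ Ideal.span {f}) +
      monomialCount (Nat.card σ) (n - o) ≤ monomialCount (Nat.card σ) n := by
  have := finite_quotient_variableIdeal_pow σ k n
  rw [← finrank_quotient_variableIdeal_pow σ k, ← finrank_quotient_variableIdeal_pow σ k]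
  exact finrank_quotient_sup_span_add_le f fun g ↦ mem_variableIdeal_pow_sub_of_mul_mem ho

theorem finrank_quotient_variableIdeal_option_pow_sup_span_le {o : ℕ}
    {f : MvPowerSeries (Option σ) k} (ho : f.order = o) (n : ℕ) :
    Module.finrank k (MvPowerSeries (Option σ) k ⧸
      variableIdeal (Option σ) k ^ n ⊔ Ideal.span {f}) ≤ o * monomialCount (Nat.card σ) n := by
  have h1 := finrank_quotient_variableIdeal_pow_sup_span_add_le ho n
  rw [Finite.card_option] at h1
  have h2 := monomialCount_succ_le_sub_add (Nat.card σ) n o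
  omega

end VariableIdeal

section TorsionFree

theorem ringKrullDim_le_of_isIntegral (R B : Type*) [CommRing R] [CommRing B] [Algebra R B]
    [Algebra.IsIntegral R B] : ringKrullDim B ≤ ringKrullDim R :=
  Order.krullDim_le_of_strictMono (PrimeSpectrum.comap (algebraMap R B))
    fun _ _ ↦ Ideal.IsIntegral.comap_lt_comap

theorem ringKrullDim_mvPowerSeries_le (k : Type*) [Field k] (σ : Type*) [Finite σ] :
    ringKrullDim (MvPowerSeries σ k) ≤ Nat.card σ := by
  have hmax : maximalIdeal (MvPowerSeries σ k) = variableIdeal σ k := by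
    ext f
    rw [← pow_one (variableIdeal σ k), mem_variableIdeal_pow_iff, mem_maximalIdeal,
      mem_nonunits_iff, MvPowerSeries.isUnit_iff_constantCoeff, isUnit_iff_ne_zero, not_not]
    simp [Finsupp.degree_eq_zero_iff]
  have hspan : (maximalIdeal (MvPowerSeries σ k)).spanFinrank ≤ Nat.card σ := by
    rw [hmax, ← Set.ncard_univ]
    refine (Submodule.spanFinrank_span_le_ncard_of_finite (Set.finite_range _)).trans ?_
    rw [← Set.image_univ]
    exact Set.ncard_image_le
  exact (ringKrullDim_le_spanFinrank_maximalIdeal _).trans (mod_cast hspan)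

variable {R A : Type*} [CommRing R] [IsDomain R] [CommRing A] [Algebra R A]
  [Algebra.IsIntegral R A] {n : ℕ}

theorem comap_algebraMap_eq_bot_of_le_ringKrullDim {P : Ideal A} (hR : ringKrullDim R ≤ n)
    (hP : n ≤ ringKrullDim (A ⧸ P)) : P.comap (algebraMap R A) = ⊥ := by
  by_contra hne
  obtain ⟨r, hr, hr0⟩ := Submodule.exists_mem_ne_zero_of_ne_bot hne
  have hquot : ringKrullDim (A ⧸ P) ≤ ringKrullDim (R ⧸ P.under R) :=
    ringKrullDim_le_of_isIntegral _ _
  have hsucc : ringKrullDim (R ⧸ P.under R) + 1 ≤ ringKrullDim R :=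
    ringKrullDim_succ_le_of_surjective _ Ideal.Quotient.mk_surjective
      (mem_nonZeroDivisors_of_ne_zero hr0) (Ideal.Quotient.eq_zero_iff_mem.2 hr)
  have hlt : (n : WithBot ℕ∞) + 1 ≤ n := by
    grw [hP, hquot, hsucc, hR]
  exact absurd hlt (mod_cast n.lt_irrefl)

theorem isTorsionFree_of_forall_le_ringKrullDim [IsReduced A] (hR : ringKrullDim R ≤ n)
    (hA : ∀ P ∈ minimalPrimes A, n ≤ ringKrullDim (A ⧸ P)) : Module.IsTorsionFree R A := by
  rw [Module.isTorsionFree_iff_smul_eq_zero]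
  intro r a hra
  refine or_iff_not_imp_left.2 fun hr ↦ ?_
  have hmem : a ∈ sInf (minimalPrimes A) := by
    refine Ideal.mem_sInf.2 fun {P} hP ↦ ?_
    have := hP.1.1
    rw [Algebra.smul_def] at hra
    refine (this.mem_or_mem (hra ▸ P.zero_mem)).resolve_left fun hrP ↦ hr ?_
    rw [← Ideal.mem_bot, ← comap_algebraMap_eq_bot_of_le_ringKrullDim hR (hA P hP)]
    exact hrP
  rwa [minimalPrimes, Ideal.sInf_minimalPrimes, Ideal.radical_bot_of_isReduced] at hmem

end TorsionFree

section AdicCompleteness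

theorem isPrecomplete_fin_fun {R : Type*} [CommRing R] (I : Ideal R) [IsPrecomplete I R] (s : ℕ) :
    IsPrecomplete I (Fin s → R) := by
  rw [← AdicCompletion.of_surjective_iff]
  intro x
  choose r hr using fun i ↦ AdicCompletion.of_surjective I R (AdicCompletion.piEquivFin I s x i)
  refine ⟨r, (AdicCompletion.piEquivFin I s).injective ?_⟩
  ext1 i
  rw [← hr i, AdicCompletion.piEquivFin_apply]
  rfl

theorem finite_of_finite_quotient_smul_top {R M : Type*} [CommRing R] [AddCommGroup M] [Module R M]
    (I : Ideal R) [IsPrecomplete I R] [IsHausdorff I M]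
    [Module.Finite R (M ⧸ (I • ⊤ : Submodule R M))] : Module.Finite R M := by
  obtain ⟨s, f, hf⟩ := Module.Finite.exists_fin' R (M ⧸ (I • ⊤ : Submodule R M))
  obtain ⟨g, rfl⟩ := Module.projective_lifting_property (I • ⊤ : Submodule R M).mkQ f
    (Submodule.mkQ_surjective _)
  have := isPrecomplete_fin_fun I s
  exact Module.Finite.of_surjective g (surjective_of_mkQ_comp_surjective hf)

theorem exists_mvPowerSeries_algHom_X_eq {σ k A : Type*} [Finite σ] [CommRing k] [CommRing A]
    [Algebra k A] (I : Ideal A) [IsAdicComplete I A] {a : σ → A} (ha : ∀ i, a i ∈ I) :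
    ∃ ψ : MvPowerSeries σ k →ₐ[k] A, ∀ i, ψ (MvPowerSeries.X i) = a i := by
  have hle (n : ℕ) : MvPolynomial.idealOfVars σ k ^ n ≤
      (I ^ n).comap (MvPolynomial.aeval (R := k) a) := by
    refine (Ideal.pow_right_mono ?_ n).trans (Ideal.le_comap_pow _ n)
    rw [MvPolynomial.idealOfVars, Ideal.span_le]
    rintro _ ⟨i, rfl⟩
    simpa using ha i
  let f (n : ℕ) : MvPowerSeries σ k →ₐ[k] A ⧸ I ^ n :=
    (Ideal.quotientMapₐ (I ^ n) (MvPolynomial.aeval a) (hle n)).comp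
      ((MvPowerSeries.truncTotalAlgHom σ k n).restrictScalars k)
  have hf (n : ℕ) (x) :
      f n x = Ideal.Quotient.mk (I ^ n) (MvPolynomial.aeval a (x.truncTotal n)) := rfl
  refine ⟨IsAdicComplete.liftAlgHom I f fun {m n} hmn ↦ ?_, fun i ↦ ?_⟩
  · ext x
    rw [AlgHom.comp_apply, hf, hf, Ideal.Quotient.factorₐ_apply_mk, Ideal.Quotient.eq, ← map_sub]
    exact hle m (MvPowerSeries.truncTotal_sub_truncTotal_mem_pow_idealOfVars hmn le_rfl x)
  · rw [← sub_eq_zero]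
    refine IsHausdorff.haus (I := I) inferInstance _ fun n ↦ ?_
    rw [SModEq.zero, smul_eq_mul, Ideal.mul_top, ← Ideal.Quotient.eq_zero_iff_mem, map_sub,
      IsAdicComplete.mk_liftAlgHom, hf, ← map_sub, Ideal.Quotient.eq_zero_iff_mem,
      ← MvPolynomial.aeval_X (R := k) a i, ← map_sub]
    refine hle n ((MvPolynomial.mem_pow_idealOfVars_iff' _ _).2 fun x hx ↦ ?_)
    rw [MvPolynomial.coeff_sub, MvPowerSeries.coeff_truncTotal _ hx, ← MvPolynomial.coe_X,
      MvPolynomial.coeff_coe, sub_self]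

end AdicCompleteness

section MinimalPolynomial

open Polynomial

theorem injective_includeRight_fractionRing (R A : Type*) [CommRing R] [IsDomain R] [CommRing A]
    [Algebra R A] [Module.IsTorsionFree R A] :
    Function.Injective
      (Algebra.TensorProduct.includeRight : A →ₐ[R] FractionRing R ⊗[R] A) := by
  rw [← AlgHom.coe_toLinearMap]
  exact (IsLocalizedModule.injective_iff_isRegular (nonZeroDivisors R)
    (TensorProduct.mk R (FractionRing R) A 1)).2 fun c ↦
      IsSMulRegular.of_ne_zero (nonZeroDivisors.ne_zero c.2)

theorem exists_monic_ker_aeval_eq_span_singleton {R A : Type*} [CommRing R] [IsDomain R]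
    [IsIntegrallyClosed R] [CommRing A] [Algebra R A] [Module.IsTorsionFree R A] {w : A}
    (hw : IsIntegral R w) :
    ∃ f : R[X], f.Monic ∧ RingHom.ker (aeval (R := R) w) = Ideal.span {f} := by
  let K := FractionRing R
  let ι : A →ₐ[R] K ⊗[R] A := Algebra.TensorProduct.includeRight
  have hι (g : R[X]) : aeval (ι w) (g.map (algebraMap R K)) = ι (aeval w g) := by
    rw [aeval_map_algebraMap, aeval_algHom_apply]
  have hint : IsIntegral K (ι w) := hw.tmul 1
  obtain ⟨g, hg, hgw⟩ := hw
  obtain ⟨f, hf⟩ := IsIntegrallyClosed.eq_map_mul_C_of_dvd K hg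
    (minpoly.dvd K (ι w) (by rw [hι, aeval_def, hgw, map_zero]))
  rw [(minpoly.monic hint).leadingCoeff, C_1, mul_one] at hf
  have hmonic : f.Monic := monic_of_injective (IsFractionRing.injective R K)
    (hf ▸ minpoly.monic hint)
  refine ⟨f, hmonic, ?_⟩
  ext h
  rw [RingHom.mem_ker, Ideal.mem_span_singleton,
    ← map_eq_zero_iff ι (injective_includeRight_fractionRing R A), ← hι,
    ← minpoly.dvd_iff, ← hf, Polynomial.map_dvd_map _ (IsFractionRing.injective R K) hmonic]

theorem linearIndependent_pow_of_ker_aeval_eq_span_singleton {R A : Type*} [CommRing R]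
    [CommRing A] [Algebra R A] {w : A} {f : R[X]} (hf : f.Monic)
    (h : RingHom.ker (aeval (R := R) w) = Ideal.span {f}) :
    LinearIndependent R fun i : Fin f.natDegree ↦ w ^ (i : ℕ) := by
  nontriviality R
  rw [Fintype.linearIndependent_iff]
  intro c hc i
  let p : R[X] := ∑ j, C (c j) * X ^ (j : ℕ)
  have hcoeff : p.coeff i = c i := by
    simp [p, Fin.val_inj]
  have hdvd : f ∣ p := by
    rw [← Ideal.mem_span_singleton, ← h, RingHom.mem_ker]
    simpa [p, Algebra.smul_def] using hc
  have hdeg : p.degree < f.degree :=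
    (degree_eq_natDegree hf.ne_zero).symm ▸ degree_sum_fin_lt c
  by_contra hi
  exact hf.not_dvd_of_degree_lt (fun hp ↦ hi (by rw [← hcoeff, hp, coeff_zero])) hdeg hdvd

end MinimalPolynomial

section ImageDimension

variable {k : Type*} [Field k]

theorem finrank_add_finrank_le_add_finrank_map {V W : Type*} [AddCommGroup V] [Module k V]
    [Module.Finite k V] [AddCommGroup W] [Module k W] {q : V →ₗ[k] W} (hq : Function.Surjective q)
    (U : Submodule k V) :
    Module.finrank k W + Module.finrank k U ≤
      Module.finrank k V + Module.finrank k (U.map q) := by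
  have hV := q.finrank_range_add_finrank_ker
  have hU := (q.domRestrict U).finrank_range_add_finrank_ker
  have hker : Module.finrank k (LinearMap.ker (q.domRestrict U)) ≤
      Module.finrank k (LinearMap.ker q) := by
    rw [LinearMap.ker_domRestrict,
      (Submodule.equivSubtypeMap U (Submodule.comap U.subtype (LinearMap.ker q))).finrank_eq]
    exact Submodule.finrank_mono (Submodule.map_comap_le _ _)
  rw [LinearMap.range_eq_top.2 hq, finrank_top] at hV
  rw [LinearMap.range_domRestrict] at hU
  omega

theorem finrank_range_le_finrank_quotient_sup_span {B A : Type*} [CommRing B] [Algebra k B]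
    [CommRing A] [Algebra k A] (φ : B →ₐ[k] A) {b : B} (hb : φ b = 0) (K : Ideal B)
    [Module.Finite k (B ⧸ K)] {L : Ideal A} (hKL : K.map φ ≤ L) :
    Module.finrank k (LinearMap.range ((Ideal.Quotient.mkₐ k L).comp φ).toLinearMap) ≤
      Module.finrank k (B ⧸ K ⊔ Ideal.span {b}) := by
  have := finite_quotient_of_le (k := k) (le_sup_left : K ≤ K ⊔ Ideal.span {b})
  have hle : K ⊔ Ideal.span {b} ≤ RingHom.ker ((Ideal.Quotient.mkₐ k L).comp φ) := by
    refine sup_le (fun x hx ↦ ?_) (Ideal.span_singleton_le_iff_mem _ |>.2 ?_)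
    · exact Ideal.Quotient.eq_zero_iff_mem.2 (hKL (Ideal.mem_map_of_mem φ hx))
    · rw [RingHom.mem_ker, AlgHom.comp_apply, hb, map_zero]
  let T := (Ideal.Quotient.liftₐ _ ((Ideal.Quotient.mkₐ k L).comp φ) hle).toLinearMap
  have hT : LinearMap.range ((Ideal.Quotient.mkₐ k L).comp φ).toLinearMap ≤ LinearMap.range T := by
    rintro _ ⟨x, rfl⟩
    exact ⟨Ideal.Quotient.mk _ x, rfl⟩
  exact (Submodule.finrank_mono hT).trans T.finrank_range_le

theorem exists_forall_comap_pow_smul_top_le {R P M : Type*} [CommRing R] [IsNoetherianRing R]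
    [AddCommGroup P] [Module R P] [AddCommGroup M] [Module R M] [Module.Finite R M]
    (I : Ideal R) {g : P →ₗ[R] M} (hg : Function.Injective g) :
    ∃ s, ∀ n ≥ s, (I ^ n • ⊤ : Submodule R M).comap g ≤ I ^ (n - s) • ⊤ := by
  obtain ⟨s, hs⟩ := I.exists_pow_inf_eq_pow_smul (LinearMap.range g)
  refine ⟨s, fun n hn ↦ ?_⟩
  rw [← Submodule.map_le_map_iff_of_injective hg, Submodule.map_comap_eq, inf_comm, hs n hn,
    Submodule.map_smul'', Submodule.map_top]
  exact smul_mono_right _ inf_le_right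

theorem exists_forall_card_mul_finrank_le {R M ι : Type*} [CommRing R] [IsNoetherianRing R]
    [Algebra k R] [AddCommGroup M] [Module R M] [Module k M] [IsScalarTower k R M]
    [Module.Finite R M] [Finite ι] (I : Ideal R) [∀ n, Module.Finite k (R ⧸ I ^ n)]
    {v : ι → M} (hv : LinearIndependent R v) :
    ∃ s, ∀ n ≥ s, ∀ {V : Type*} [AddCommGroup V] [Module k V] [Module.Finite k V]
      {F : M →ₗ[k] V}, LinearMap.ker F ≤ (I ^ n • ⊤ : Submodule R M).restrictScalars k →
      Nat.card ι * Module.finrank k (R ⧸ I ^ (n - s)) ≤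
        Module.finrank k (((Submodule.span R (Set.range v)).restrictScalars k).map F) := by
  have := Fintype.ofFinite ι
  obtain ⟨s, hs⟩ := exists_forall_comap_pow_smul_top_le I
    (LinearIndependent.fintypeLinearCombination_injective hv)
  refine ⟨s, fun n hn V _ _ _ F hF ↦ ?_⟩
  let g := Fintype.linearCombination R v
  let π : (ι → R) →ₗ[k] (ι → R ⧸ I ^ (n - s)) :=
    LinearMap.pi fun i ↦ (Ideal.Quotient.mkₐ k _).toLinearMap ∘ₗ LinearMap.proj i
  have hπ : Function.Surjective π :=
    Function.Surjective.piMap (fun _ ↦ Ideal.Quotient.mk_surjective)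
  have hker : LinearMap.ker (F ∘ₗ g.restrictScalars k) ≤ LinearMap.ker π := by
    intro x hx
    refine funext fun i ↦ Ideal.Quotient.eq_zero_iff_mem.2 ?_
    have hgx : x ∈ (I ^ n • ⊤ : Submodule R M).comap g := hF hx
    have h := Submodule.smul_top_le_comap_smul_top (I ^ (n - s))
      (LinearMap.proj i : (ι → R) →ₗ[R] R) (hs n hn hgx)
    rwa [smul_eq_mul, Ideal.mul_top] at h
  have hrange : ((Submodule.span R (Set.range v)).restrictScalars k).map F =
      LinearMap.range (F ∘ₗ g.restrictScalars k) := by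
    rw [LinearMap.range_comp, LinearMap.range_restrictScalars, Fintype.range_linearCombination]
  rw [hrange, Nat.card_eq_fintype_card]
  simpa [Module.finrank_pi_fintype] using finrank_le_finrank_range_of_ker_le hπ hker

end ImageDimension

section CountingDichotomy

open Polynomial MvPowerSeries

variable (σ k : Type*) [Field k]

/-- A polynomial over `k⟦σ⟧` viewed as a power series in one more variable, the polynomial variable
becoming `X none`. -/
noncomputable def polynomialToMvPowerSeries :
    Polynomial (MvPowerSeries σ k) →ₐ[k] MvPowerSeries (Option σ) k :=
  (optionEquivLeft σ k).symm.toAlgHom.comp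
    ((coeToPowerSeries.algHom (MvPowerSeries σ k)).restrictScalars k)

theorem optionEquivLeft_polynomialToMvPowerSeries (g : Polynomial (MvPowerSeries σ k)) :
    optionEquivLeft σ k (polynomialToMvPowerSeries σ k g) = g := by
  simp [polynomialToMvPowerSeries]

theorem polynomialToMvPowerSeries_X :
    polynomialToMvPowerSeries σ k Polynomial.X = X none := by
  apply (optionEquivLeft σ k).injective
  rw [optionEquivLeft_polynomialToMvPowerSeries, Polynomial.coe_X, optionEquivLeft_X_none]

theorem polynomialToMvPowerSeries_C_X (i : σ) :
    polynomialToMvPowerSeries σ k (Polynomial.C (X i)) = X (some i) := by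
  apply (optionEquivLeft σ k).injective
  rw [optionEquivLeft_polynomialToMvPowerSeries, Polynomial.coe_C, optionEquivLeft_X_some]

variable {σ k}

theorem exists_order_polynomialToMvPowerSeries_lt [Finite σ] {g : Polynomial (MvPowerSeries σ k)}
    {r i : ℕ} (h : g.coeff i ∉ variableIdeal σ k ^ (r - i)) :
    ∃ o : ℕ, (polynomialToMvPowerSeries σ k g).order = o ∧ o < r := by
  rw [mem_variableIdeal_pow_iff] at h
  push Not at h
  obtain ⟨x, hx, hne⟩ := h
  have hcoeff : MvPowerSeries.coeff (x.optionElim i) (polynomialToMvPowerSeries σ k g) ≠ 0 := by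
    rwa [← coeff_coeff_optionEquivLeft, optionEquivLeft_polynomialToMvPowerSeries,
      Polynomial.coeff_coe]
  have hdeg : Finsupp.degree (x.optionElim i) = i + Finsupp.degree x := by
    have := Fintype.ofFinite σ
    simp [Finsupp.degree_eq_sum, Fintype.sum_option]
  have hle := order_le hcoeff
  obtain ⟨o, ho⟩ := ENat.ne_top_iff_exists.1 (ne_top_of_le_ne_top (ENat.natCast_ne_top _) hle)
  refine ⟨o, ho.symm, ?_⟩
  rw [← ho, hdeg] at hle
  have : o ≤ i + Finsupp.degree x := mod_cast hle
  omega

variable {A : Type*} [CommRing A] [Algebra k A] [Algebra (MvPowerSeries σ k) A]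
  [IsScalarTower k (MvPowerSeries σ k) A]

theorem exists_forall_finrank_add_le [Finite σ] [Module.Finite (MvPowerSeries σ k) A] {w : A}
    {ψ : MvPowerSeries (Option σ) k →ₐ[k] A}
    (hψ : ∀ g, ψ (polynomialToMvPowerSeries σ k g) = aeval w g)
    {r : ℕ} (hr : LinearIndependent (MvPowerSeries σ k) fun i : Fin r ↦ w ^ (i : ℕ))
    {g : Polynomial (MvPowerSeries σ k)} (hg : aeval w g = 0)
    {o : ℕ} (ho : (polynomialToMvPowerSeries σ k g).order = o)
    {L : Ideal A} (hJL : (variableIdeal σ k).map (algebraMap _ A) ≤ L)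
    (hL : (variableIdeal (Option σ) k).map ψ ≤ L)
    [∀ n, Module.Finite k (A ⧸ (variableIdeal σ k).map (algebraMap _ A) ^ n)] :
    ∃ s, ∀ n ≥ s,
      Module.finrank k (A ⧸ L ^ n) + r * monomialCount (Nat.card σ) (n - s) ≤
        Module.finrank k (A ⧸ (variableIdeal σ k).map (algebraMap _ A) ^ n) +
          o * monomialCount (Nat.card σ) n := by
  have := finite_quotient_variableIdeal_pow σ k
  obtain ⟨s, hs⟩ := exists_forall_card_mul_finrank_le (k := k) (variableIdeal σ k) hr
  refine ⟨s, fun n hn ↦ ?_⟩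
  set J := (variableIdeal σ k).map (algebraMap _ A)
  let q := (Ideal.Quotient.factorₐ k (Ideal.pow_right_mono hJL n)).toLinearMap
  have hq : Function.Surjective q := Ideal.Quotient.factor_surjective (Ideal.pow_right_mono hJL n)
  let U := LinearMap.range ((Ideal.Quotient.mkₐ k (J ^ n)).comp ψ).toLinearMap
  have hlower : r * monomialCount (Nat.card σ) (n - s) ≤ Module.finrank k U := by
    rw [← finrank_quotient_variableIdeal_pow σ k]
    have h := hs n hn (F := (Ideal.Quotient.mkₐ k (J ^ n)).toLinearMap) ?_
    · rw [Nat.card_fin] at h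
      refine h.trans (Submodule.finrank_mono ?_)
      rintro _ ⟨a, ha, rfl⟩
      have hspan : Submodule.span _ (Set.range fun i : Fin r ↦ w ^ (i : ℕ)) ≤
          LinearMap.range (aeval (R := MvPowerSeries σ k) w).toLinearMap := by
        rw [Submodule.span_le]
        rintro _ ⟨i, rfl⟩
        exact ⟨Polynomial.X ^ (i : ℕ), by simp⟩
      obtain ⟨p, rfl⟩ := hspan ha
      exact ⟨polynomialToMvPowerSeries σ k p, congrArg _ (hψ p)⟩
    · rw [Ideal.smul_top_eq_map, Ideal.map_pow]
      exact fun a ha ↦ Ideal.Quotient.eq_zero_iff_mem.1 ha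
  have hupper : Module.finrank k (U.map q) ≤ o * monomialCount (Nat.card σ) n := by
    have := finite_quotient_variableIdeal_pow (Option σ) k n
    have hU : U.map q = LinearMap.range ((Ideal.Quotient.mkₐ k (L ^ n)).comp ψ).toLinearMap := by
      rw [← LinearMap.range_comp]
      rfl
    have hLn : (variableIdeal (Option σ) k ^ n).map ψ ≤ L ^ n := by
      rw [Ideal.map_pow]
      exact Ideal.pow_right_mono hL n
    rw [hU]
    exact (finrank_range_le_finrank_quotient_sup_span ψ ((hψ g).trans hg) _ hLn).trans
      (finrank_quotient_variableIdeal_option_pow_sup_span_le ho n)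
  have := finrank_add_finrank_le_add_finrank_map hq U
  omega

end CountingDichotomy

section IntegralityDichotomy

open Polynomial MvPowerSeries

variable {k A : Type*} [Field k] [CommRing A] [Algebra k A]

theorem isIntegralOverIdeal_of_aeval_eq_zero {R A : Type*} [CommRing R] [CommRing A] [Algebra R A]
    {K : Ideal R} {w : A} {f : R[X]} (hf : f.Monic) (hfw : aeval w f = 0)
    (hcoeff : ∀ i, f.coeff i ∈ K ^ (f.natDegree - i)) :
    IsIntegralOverIdeal (K.map (algebraMap R A)) w := by
  cases subsingleton_or_nontrivial A
  · exact ⟨1, one_pos, 0, by simp, Subsingleton.elim _ _⟩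
  have hdeg : 0 < f.natDegree := hf.natDegree_pos.2 fun h ↦ by simp [h] at hfw
  refine ⟨f.natDegree, hdeg, fun i ↦ algebraMap R A (f.coeff (f.natDegree - i)),
    fun i hi ↦ ?_, ?_⟩
  · rw [← Ideal.map_pow]
    refine Ideal.mem_map_of_mem _ ?_
    have := hcoeff (f.natDegree - i)
    rwa [Nat.sub_sub_self (Finset.mem_Icc.1 hi).2] at this
  · rw [hf.as_sum] at hfw
    simp only [map_add, map_pow, aeval_X, map_sum, map_mul, aeval_C] at hfw
    rw [← hfw]
    congr 1
    refine Finset.sum_nbij' (f.natDegree - ·) (f.natDegree - ·) ?_ ?_ ?_ ?_ fun _ _ ↦ rfl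
    all_goals grind

theorem finite_mvPowerSeries_of_finite_quotient_map {σ : Type*} [Finite σ]
    [Algebra (MvPowerSeries σ k) A] [IsScalarTower k (MvPowerSeries σ k) A]
    (I : Ideal A) [IsAdicComplete I A] (hI : (variableIdeal σ k).map (algebraMap _ A) ≤ I)
    [Module.Finite k (A ⧸ (variableIdeal σ k).map (algebraMap _ A))] :
    Module.Finite (MvPowerSeries σ k) A := by
  have : IsHausdorff (variableIdeal σ k) A := by
    exact IsHausdorff.of_map hI
  have : Module.Finite (MvPowerSeries σ k)
      (A ⧸ (variableIdeal σ k • ⊤ : Submodule (MvPowerSeries σ k) A)) := by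
    rw [Ideal.smul_top_eq_map]
    exact (Module.Finite.of_restrictScalars_finite k _ _ : Module.Finite (MvPowerSeries σ k)
      (A ⧸ (variableIdeal σ k).map (algebraMap _ A)))
  exact finite_of_finite_quotient_smul_top (variableIdeal σ k)

theorem isIntegralOverIdeal_or_exists_forall_finrank_add_le_of_algebra {d : ℕ}
    [Algebra (MvPowerSeries (Fin d) k) A] [IsScalarTower k (MvPowerSeries (Fin d) k) A]
    [Module.Finite (MvPowerSeries (Fin d) k) A] [Module.IsTorsionFree (MvPowerSeries (Fin d) k) A]
    {w : A} {ψ : MvPowerSeries (Option (Fin d)) k →ₐ[k] A}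
    (hψ : ∀ g, ψ (polynomialToMvPowerSeries (Fin d) k g) = aeval w g)
    {L : Ideal A} (hJL : (variableIdeal (Fin d) k).map (algebraMap _ A) ≤ L)
    (hL : (variableIdeal (Option (Fin d)) k).map ψ ≤ L)
    [∀ n, Module.Finite k (A ⧸ (variableIdeal (Fin d) k).map (algebraMap _ A) ^ n)] :
    IsIntegralOverIdeal ((variableIdeal (Fin d) k).map (algebraMap _ A)) w ∨
      ∃ r o s, o < r ∧ ∀ n ≥ s,
        Module.finrank k (A ⧸ L ^ n) + r * monomialCount d (n - s) ≤
          Module.finrank k (A ⧸ (variableIdeal (Fin d) k).map (algebraMap _ A) ^ n) +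
            o * monomialCount d n := by
  have := NoZeroDivisors.to_isDomain (MvPowerSeries (Fin d) k)
  have : IsIntegrallyClosed (MvPowerSeries (Fin d) k) :=
    (isCompletelyIntegrallyClosed_mvPowerSeries k d).isIntegrallyClosed
  obtain ⟨f, hf, hker⟩ := exists_monic_ker_aeval_eq_span_singleton
    (Algebra.IsIntegral.isIntegral (R := MvPowerSeries (Fin d) k) w)
  have hfw : aeval w f = 0 := by
    rw [← RingHom.mem_ker, hker]
    exact Ideal.mem_span_singleton_self f
  by_cases hcoeff : ∀ i, f.coeff i ∈ variableIdeal (Fin d) k ^ (f.natDegree - i)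
  · exact .inl (isIntegralOverIdeal_of_aeval_eq_zero hf hfw hcoeff)
  · push Not at hcoeff
    obtain ⟨i, hi⟩ := hcoeff
    obtain ⟨o, ho, hlt⟩ := exists_order_polynomialToMvPowerSeries_lt hi
    obtain ⟨s, hs⟩ := exists_forall_finrank_add_le hψ
      (linearIndependent_pow_of_ker_aeval_eq_span_singleton hf hker) hfw ho hJL hL
    rw [Nat.card_fin] at hs
    exact .inr ⟨f.natDegree, o, s, hlt, hs⟩

theorem map_variableIdeal {σ R B F : Type*} [CommRing R] [CommRing B]
    [FunLike F (MvPowerSeries σ R) B] [RingHomClass F (MvPowerSeries σ R) B] (φ : F) :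
    (variableIdeal σ R).map φ = Ideal.span (Set.range fun i ↦ φ (X i)) := by
  rw [Ideal.map_span, ← Set.range_comp]
  rfl

theorem map_variableIdeal_option {σ R B F : Type*} [CommRing R] [CommRing B]
    [FunLike F (MvPowerSeries (Option σ) R) B] [RingHomClass F (MvPowerSeries (Option σ) R) B]
    {φ : F} {w : B} {y : σ → B} (h : ∀ i, φ (X i) = i.elim w y) :
    (variableIdeal (Option σ) R).map φ = Ideal.span (Set.range y) ⊔ Ideal.span {w} := by
  rw [map_variableIdeal, ← Ideal.span_union]
  congr 1
  ext a
  simp [h, Option.exists, eq_comm]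

theorem isIntegralOverIdeal_or_exists_forall_finrank_add_le (I : Ideal A) [IsAdicComplete I A]
    [IsReduced A] {d : ℕ} (hA : ∀ P ∈ minimalPrimes A, d ≤ ringKrullDim (A ⧸ P)) {y : Fin d → A}
    (hy : ∀ i, y i ∈ I) [Module.Finite k (A ⧸ Ideal.span (Set.range y))] {w : A} (hw : w ∈ I) :
    IsIntegralOverIdeal (Ideal.span (Set.range y)) w ∨
      ∃ r o s, o < r ∧ ∀ n ≥ s,
        Module.finrank k (A ⧸ (Ideal.span (Set.range y) ⊔ Ideal.span {w}) ^ n) +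
            r * monomialCount d (n - s) ≤
          Module.finrank k (A ⧸ Ideal.span (Set.range y) ^ n) + o * monomialCount d n := by
  obtain ⟨ψ, hψX⟩ := exists_mvPowerSeries_algHom_X_eq (k := k) I
    (a := fun i : Option (Fin d) ↦ i.elim w y) (Option.forall.2 ⟨hw, hy⟩)
  let φ := (ψ.comp (polynomialToMvPowerSeries (Fin d) k)).comp
    (CAlgHom (R := k) (A := MvPowerSeries (Fin d) k))
  let : Algebra (MvPowerSeries (Fin d) k) A := φ.toAlgebra
  have : IsScalarTower k (MvPowerSeries (Fin d) k) A := .of_algHom φ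
  have hψ (g) : ψ (polynomialToMvPowerSeries (Fin d) k g) = aeval w g := by
    have hX : ψ (polynomialToMvPowerSeries (Fin d) k Polynomial.X) = w := by
      rw [polynomialToMvPowerSeries_X, hψX, Option.elim_none]
    induction g using Polynomial.induction_on' with
    | add p q hp hq => simp only [map_add, hp, hq]
    | monomial n a =>
      rw [← C_mul_X_pow_eq_monomial, map_mul, map_mul, map_pow, map_pow, hX, map_mul, map_pow,
        aeval_X, aeval_C]
      rfl
  have hJ : (variableIdeal (Fin d) k).map (algebraMap _ A) = Ideal.span (Set.range y) := by
    rw [map_variableIdeal]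
    congr 2
    funext i
    exact (congrArg ψ (polynomialToMvPowerSeries_C_X (Fin d) k i)).trans (hψX (some i))
  have hJI : Ideal.span (Set.range y) ≤ I := Ideal.span_le.2 (Set.range_subset_iff.2 hy)
  have : Module.Finite k (A ⧸ (variableIdeal (Fin d) k).map (algebraMap _ A)) := by
    rwa [hJ]
  have := finite_mvPowerSeries_of_finite_quotient_map (k := k) I (hJ.trans_le hJI)
  have := NoZeroDivisors.to_isDomain (MvPowerSeries (Fin d) k)
  have : Module.IsTorsionFree (MvPowerSeries (Fin d) k) A :=
    isTorsionFree_of_forall_le_ringKrullDim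
      ((ringKrullDim_mvPowerSeries_le k (Fin d)).trans_eq (by rw [Nat.card_fin])) hA
  have hfin (n : ℕ) : Module.Finite k (A ⧸ (variableIdeal (Fin d) k).map (algebraMap _ A) ^ n) :=
    finite_quotient_pow (hJ ▸ Submodule.fg_span (Set.finite_range y)) n
  have h := isIntegralOverIdeal_or_exists_forall_finrank_add_le_of_algebra hψ
    (hJ.trans_le le_sup_left) (map_variableIdeal_option hψX).le
  rwa [hJ] at h

end IntegralityDichotomy

section Length

variable {k A : Type*} [Field k] [CommRing A] [IsLocalRing A] [Algebra k A]

theorem finrank_eq_toNat_moduleLength (hk : Function.Surjective (algebraMap k (ResidueField A)))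
    (M : Type*) [AddCommGroup M] [Module k M] [Module A M] [IsScalarTower k A M] :
    Module.finrank k M = (moduleLength A M).toNat := by
  have hsurj : Function.Surjective (algebraMap (ResidueField k) (ResidueField A)) := fun x ↦ by
    obtain ⟨c, rfl⟩ := hk x
    exact ⟨residue k c, rfl⟩
  have hone : Module.length (ResidueField k) (ResidueField A) = 1 := by
    rw [Module.length_eq_of_surjective (R := ResidueField A) hsurj, Module.length_eq_one]
  have hlength : Module.length k M = Module.length A M := by
    rw [length_restrictScalars k A M, hone, mul_one]
  rw [moduleLength, ← Module.length_eq_height, ← hlength, Module.length_eq_rank,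
    Cardinal.toNat_toENat, Module.finrank]

theorem finite_quotient_of_maximalIdeal_le_radical [IsNoetherianRing A]
    (hk : Function.Surjective (algebraMap k (ResidueField A))) {I : Ideal A}
    (hI : maximalIdeal A ≤ I.radical) : Module.Finite k (A ⧸ I) := by
  have : Module.Finite k (A ⧸ maximalIdeal A) := .of_surjective (Algebra.linearMap k _) hk
  obtain ⟨n, hn⟩ := Ideal.exists_pow_le_of_le_radical_of_fg hI (IsNoetherian.noetherian _)
  have := finite_quotient_pow (k := k) (IsNoetherian.noetherian (maximalIdeal A)) n
  exact finite_quotient_of_le hn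

end Length

section IntegralElements

variable {A : Type*} [CommRing A] {I J K L : Ideal A} {z : A}

theorem isIntegralOverIdeal_mono (hIJ : I ≤ J) (hz : IsIntegralOverIdeal I z) :
    IsIntegralOverIdeal J z := by
  obtain ⟨n, hn, a, ha, h⟩ := hz
  exact ⟨n, hn, a, fun i hi ↦ Ideal.pow_right_mono hIJ i (ha i hi), h⟩

theorem isIntegralOverIdeal_of_pow {N : ℕ} (hN : 0 < N) (hz : IsIntegralOverIdeal (I ^ N) (z ^ N)) :
    IsIntegralOverIdeal I z := by
  obtain ⟨n, hn, a, ha, h⟩ := hz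
  have hIcc (i : ℕ) : N * i ∈ Finset.Icc 1 (N * n) ↔ i ∈ Finset.Icc 1 n := by
    simp only [Finset.mem_Icc, Nat.one_le_iff_ne_zero, mul_ne_zero_iff, hN.ne', ne_eq,
      not_false_eq_true, true_and, mul_le_mul_iff_right₀ hN]
  refine ⟨N * n, Nat.mul_pos hN hn, fun j ↦ if N ∣ j then a (j / N) else 0, fun j hj ↦ ?_, ?_⟩
  · dsimp only
    split_ifs with hdvd
    · obtain ⟨i, rfl⟩ := hdvd
      rw [Nat.mul_div_cancel_left _ hN, pow_mul]
      exact ha i ((hIcc i).1 hj)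
    · exact zero_mem _
  · refine Eq.trans ?_ h
    rw [← pow_mul]
    congr 1
    refine (Finset.sum_of_injOn (N * ·) ?_ (fun i hi ↦ (hIcc i).2 hi) ?_ fun i _ ↦ ?_).symm
    · exact fun i _ j _ hij ↦ Nat.eq_of_mul_eq_mul_left hN hij
    · intro j hj hj'
      beta_reduce
      rw [if_neg, zero_mul]
      rintro ⟨i, rfl⟩
      exact hj' ⟨i, (hIcc i).1 hj, rfl⟩
    · beta_reduce
      rw [if_pos (Dvd.intro _ rfl), Nat.mul_div_cancel_left _ hN, ← pow_mul, Nat.mul_sub]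

theorem sup_span_singleton_pow_succ_le (K : Ideal A) (z : A) (c : ℕ) :
    (K ⊔ Ideal.span {z}) ^ (c + 1) ≤ K * (K ⊔ Ideal.span {z}) ^ c ⊔ Ideal.span {z ^ (c + 1)} := by
  set L := K ⊔ Ideal.span {z} with hL
  induction c with
  | zero => simp [hL]
  | succ c ih =>
    have hz : Ideal.span {z ^ (c + 1)} ≤ L ^ (c + 1) := by
      rw [← Ideal.span_singleton_pow]
      exact Ideal.pow_right_mono le_sup_right _
    calc L ^ (c + 1 + 1) ≤ (K * L ^ c ⊔ Ideal.span {z ^ (c + 1)}) * L :=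
          (pow_succ L (c + 1)).trans_le (Ideal.mul_mono_left ih)
      _ = K * L ^ (c + 1) ⊔ (K * Ideal.span {z ^ (c + 1)} ⊔ Ideal.span {z ^ (c + 1 + 1)}) := by
        rw [Ideal.sup_mul, mul_assoc, ← pow_succ]
        conv_lhs =>
          rw [hL, Ideal.mul_sup, ← hL, mul_comm _ K, Ideal.span_singleton_mul_span_singleton,
            ← pow_succ]
      _ ≤ K * L ^ (c + 1) ⊔ Ideal.span {z ^ (c + 1 + 1)} :=
        sup_le le_sup_left (sup_le_sup_right (Ideal.mul_mono_right hz) _)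

theorem exists_sup_span_singleton_pow_succ_le_mul (hz : IsIntegralOverIdeal K z) :
    ∃ c, (K ⊔ Ideal.span {z}) ^ (c + 1) ≤ K * (K ⊔ Ideal.span {z}) ^ c := by
  obtain ⟨n, hn, a, ha, h⟩ := hz
  obtain ⟨c, rfl⟩ := Nat.exists_eq_add_one.2 hn
  refine ⟨c, (sup_span_singleton_pow_succ_le K z c).trans (sup_le le_rfl ?_)⟩
  set L := K ⊔ Ideal.span {z}
  have hzL : z ∈ L := Ideal.mem_sup_right (Ideal.mem_span_singleton_self z)
  rw [Ideal.span_singleton_le_iff_mem, eq_neg_of_add_eq_zero_left h]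
  refine neg_mem (sum_mem fun i hi ↦ ?_)
  have hterm : a i * z ^ (c + 1 - i) ∈ K ^ i * L ^ (c + 1 - i) :=
    Ideal.mul_mem_mul (ha i hi) (Ideal.pow_mem_pow hzL _)
  rw [Finset.mem_Icc] at hi
  obtain ⟨j, rfl⟩ := Nat.exists_eq_add_one.2 hi.1
  refine (?_ : K ^ (j + 1) * L ^ (c + 1 - (j + 1)) ≤ K * L ^ c) hterm
  calc K ^ (j + 1) * L ^ (c + 1 - (j + 1)) ≤ K * (L ^ j * L ^ (c + 1 - (j + 1))) := by
        rw [pow_succ', mul_assoc]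
        exact Ideal.mul_mono_right (Ideal.mul_mono_left (Ideal.pow_right_mono le_sup_left j))
    _ = K * L ^ c := by rw [← pow_add]; congr 2; omega

theorem pow_add_le_of_pow_succ_le_mul {c : ℕ} (h : L ^ (c + 1) ≤ K * L ^ c) (n : ℕ) :
    L ^ (n + c) ≤ K ^ n := by
  suffices L ^ (n + c) ≤ K ^ n * L ^ c from this.trans Ideal.mul_le_left
  induction n with
  | zero => simp
  | succ n ih =>
    calc L ^ (n + 1 + c) = L ^ (n + c) * L := by rw [← pow_succ, Nat.add_right_comm]
      _ ≤ K ^ n * L ^ c * L := Ideal.mul_mono_left ih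
      _ = K ^ n * L ^ (c + 1) := by rw [mul_assoc, ← pow_succ]
      _ ≤ K ^ n * (K * L ^ c) := Ideal.mul_mono_right h
      _ = K ^ (n + 1) * L ^ c := by rw [← mul_assoc, ← pow_succ]

theorem exists_forall_pow_add_le_of_isIntegralOverIdeal (hJ : J.FG)
    (h : ∀ z ∈ J, IsIntegralOverIdeal I z) : ∃ c, ∀ n, J ^ (n + c) ≤ I ^ n := by
  suffices ∀ K ≥ I, ∃ c, ∀ n, (K ⊔ J) ^ (n + c) ≤ K ^ n by
    obtain ⟨c, hc⟩ := this I le_rfl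
    exact ⟨c, fun n ↦ (Ideal.pow_right_mono le_sup_right _).trans (hc n)⟩
  induction J, hJ using Submodule.fg_induction with
  | singleton z =>
    intro K hK
    obtain ⟨c, hc⟩ := exists_sup_span_singleton_pow_succ_le_mul
      (isIntegralOverIdeal_mono hK (h z (Ideal.mem_span_singleton_self z)))
    exact ⟨c, pow_add_le_of_pow_succ_le_mul hc⟩
  | sup J₁ J₂ _ _ ih₁ ih₂ =>
    intro K hK
    obtain ⟨c₁, hc₁⟩ := ih₁ (fun z hz ↦ h z (Ideal.mem_sup_left hz)) K hK
    obtain ⟨c₂, hc₂⟩ := ih₂ (fun z hz ↦ h z (Ideal.mem_sup_right hz)) (K ⊔ J₁)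
      (hK.trans le_sup_left)
    refine ⟨c₁ + c₂, fun n ↦ ?_⟩
    rw [← sup_assoc, ← add_assoc]
    exact (hc₂ _).trans (hc₁ n)

end IntegralElements

section Multiplicity

/-- `e` is the multiplicity `lim d! l(n) / n ^ d` of a numerical function `l` of degree `d`; the
Hilbert–Samuel multiplicity of `I` is the case `l n = ℓ(A / I ^ n)`. -/
def HasMultiplicity (d : ℕ) (l : ℕ → ℝ) (e : ℝ) : Prop :=
  Tendsto (fun n : ℕ ↦ d.factorial * l n / n ^ d) atTop (𝓝 e)

namespace HasMultiplicity

variable {d : ℕ} {l l' : ℕ → ℝ} {e e' : ℝ}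

theorem add (h : HasMultiplicity d l e) (h' : HasMultiplicity d l' e') :
    HasMultiplicity d (fun n ↦ l n + l' n) (e + e') := by
  refine (Tendsto.add h h').congr fun n ↦ ?_
  rw [mul_add, add_div]

theorem const_mul (c : ℝ) (h : HasMultiplicity d l e) :
    HasMultiplicity d (fun n ↦ c * l n) (c * e) := by
  refine (Tendsto.const_mul c h).congr fun n ↦ ?_
  rw [← mul_div_assoc, mul_left_comm]

theorem le (h : HasMultiplicity d l e) (h' : HasMultiplicity d l' e')
    (hle : ∀ᶠ n in atTop, l n ≤ l' n) : e ≤ e' := by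
  refine le_of_tendsto_of_tendsto h h' (hle.mono fun n hn ↦ ?_)
  dsimp only
  gcongr

theorem comp (h : HasMultiplicity d l e) {u : ℕ → ℕ} {a : ℝ} (hu : Tendsto u atTop atTop)
    (ha : Tendsto (fun n ↦ (u n / n : ℝ)) atTop (𝓝 a)) :
    HasMultiplicity d (fun n ↦ l (u n)) (a ^ d * e) := by
  refine ((ha.pow d).mul (Tendsto.comp h hu)).congr' ?_
  filter_upwards [hu.eventually_gt_atTop 0] with n hn
  rw [Function.comp_apply, div_pow]
  have : (u n : ℝ) ≠ 0 := by positivity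
  field_simp

theorem comp_mul_add (h : HasMultiplicity d l e) {N : ℕ} (hN : 0 < N) (c : ℕ) :
    HasMultiplicity d (fun n ↦ l (N * (n + c))) (N ^ d * e) := by
  refine h.comp (tendsto_atTop_mono (fun n ↦ ?_) tendsto_id) ?_
  · exact (Nat.le_add_right n c).trans (Nat.le_mul_of_pos_left _ hN)
  · have := (tendsto_const_div_atTop_nhds_zero_nat (N * c : ℝ)).const_add (N : ℝ)
    rw [add_zero] at this
    refine this.congr' ?_
    filter_upwards [eventually_gt_atTop 0] with n hn
    push_cast
    field_simp

theorem comp_sub (h : HasMultiplicity d l e) (s : ℕ) :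
    HasMultiplicity d (fun n ↦ l (n - s)) e := by
  have := h.comp (tendsto_sub_atTop_nat s) (a := 1) ?_
  · rwa [one_pow, one_mul] at this
  · have := (tendsto_const_div_atTop_nhds_zero_nat (s : ℝ)).const_sub 1
    rw [sub_zero] at this
    refine this.congr' ?_
    filter_upwards [eventually_gt_atTop s] with n hn
    rw [Nat.cast_sub hn.le, sub_div, div_self]
    exact Nat.cast_ne_zero.2 (Nat.ne_zero_of_lt hn)

theorem exists_forall_le {l : ℕ → ℕ} (h : HasMultiplicity d (fun n ↦ l n) e) (h0 : l 0 = 0) :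
    ∃ c, ∀ n, l n ≤ c * n ^ d := by
  obtain ⟨B, hB⟩ := h.bddAbove_range
  refine ⟨⌈B⌉₊, fun n ↦ ?_⟩
  obtain rfl | hn := n.eq_zero_or_pos
  · simp [h0]
  · have hle : (d.factorial * l n : ℝ) ≤ B * n ^ d :=
      (div_le_iff₀ (by positivity)).1 (hB ⟨n, rfl⟩)
    have hfact : (1 : ℝ) ≤ d.factorial := mod_cast d.factorial_pos
    have : (l n : ℝ) ≤ ⌈B⌉₊ * n ^ d :=
      calc (l n : ℝ) ≤ d.factorial * l n := le_mul_of_one_le_left (by positivity) hfact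
        _ ≤ B * n ^ d := hle
        _ ≤ ⌈B⌉₊ * n ^ d := by gcongr; exact Nat.le_ceil B
    exact_mod_cast this

end HasMultiplicity

theorem hasMultiplicity_monomialCount (d : ℕ) : HasMultiplicity d (fun n ↦ monomialCount d n) 1 :=
  tendsto_monomialCount_div d

end Multiplicity

section ReesCriterion

variable {k A : Type*} [Field k] [CommRing A] [Algebra k A] {I I' : Ideal A} {d : ℕ} {e e' : ℝ}

theorem not_exists_forall_finrank_add_le {J L : Ideal A} {N m : ℕ} (hN : 0 < N)
    (hJ : ∀ n, I ^ (N * (n + m)) ≤ J ^ n) (hL : L ≤ I' ^ N)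
    [∀ n, Module.Finite k (A ⧸ I ^ n)] [∀ n, Module.Finite k (A ⧸ L ^ n)]
    (hI : HasMultiplicity d (fun n ↦ Module.finrank k (A ⧸ I ^ n)) e)
    (hI' : HasMultiplicity d (fun n ↦ Module.finrank k (A ⧸ I' ^ n)) e) {r o s : ℕ} (hor : o < r) :
    ¬ ∀ n ≥ s, Module.finrank k (A ⧸ L ^ n) + r * monomialCount d (n - s) ≤
      Module.finrank k (A ⧸ J ^ n) + o * monomialCount d n := by
  intro h
  have hcount := hasMultiplicity_monomialCount d
  have hle : N ^ d * e + r * 1 ≤ N ^ d * e + o * 1 := by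
    refine ((hI'.comp_mul_add hN 0).add ((hcount.comp_sub s).const_mul r)).le
      ((hI.comp_mul_add hN m).add (hcount.const_mul o)) ?_
    filter_upwards [eventually_ge_atTop s] with n hn
    have hlower : Module.finrank k (A ⧸ I' ^ (N * (n + 0))) ≤ Module.finrank k (A ⧸ L ^ n) :=
      finrank_quotient_le_of_le (by rw [add_zero, pow_mul]; exact Ideal.pow_right_mono hL n)
    have hupper : Module.finrank k (A ⧸ J ^ n) ≤ Module.finrank k (A ⧸ I ^ (N * (n + m))) :=
      finrank_quotient_le_of_le (hJ n)
    exact_mod_cast (by grind : Module.finrank k (A ⧸ I' ^ (N * (n + 0))) +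
      r * monomialCount d (n - s) ≤
        Module.finrank k (A ⧸ I ^ (N * (n + m))) + o * monomialCount d n)
  have : (o : ℝ) < r := mod_cast hor
  linarith

theorem isIntegralOverIdeal_of_hasMultiplicity (M : Ideal A) [IsAdicComplete M A] [IsReduced A]
    (hA : ∀ P ∈ minimalPrimes A, d ≤ ringKrullDim (A ⧸ P)) (hII' : I ≤ I') (hI'M : I' ≤ M)
    (hfg : I.FG) [Module.Finite k (A ⧸ I)]
    (hI : HasMultiplicity d (fun n ↦ Module.finrank k (A ⧸ I ^ n)) e)
    (hI' : HasMultiplicity d (fun n ↦ Module.finrank k (A ⧸ I' ^ n)) e) {z : A} (hz : z ∈ I') :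
    IsIntegralOverIdeal I z := by
  have hfin := finite_quotient_pow (k := k) hfg
  obtain ⟨c, hc⟩ := hI.exists_forall_le (by
    rw [pow_zero, Ideal.one_eq_top]
    exact Module.finrank_zero_of_subsingleton)
  obtain ⟨N, hN, y, hyI, m, hy⟩ := exists_pow_le_pow_span_range hfg
    ((hII'.trans hI'M).trans (IsAdicComplete.le_jacobson_bot M)) hfin hc
  have hyM (i) : y i ∈ M := hI'M (hII' (Ideal.pow_le_self hN.ne' (hyI i)))
  have hJI : Ideal.span (Set.range y) ≤ I ^ N := Ideal.span_le.2 (Set.range_subset_iff.2 hyI)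
  have : Module.Finite k (A ⧸ Ideal.span (Set.range y)) :=
    finite_quotient_of_le ((hy 1).trans_eq (pow_one _))
  obtain hint | ⟨r, o, s, hor, hle⟩ := isIntegralOverIdeal_or_exists_forall_finrank_add_le
    (k := k) M hA hyM (hI'M (Ideal.pow_le_self hN.ne' (Ideal.pow_mem_pow hz N)))
  · exact isIntegralOverIdeal_of_pow hN (isIntegralOverIdeal_mono hJI hint)
  · have hLI' : Ideal.span (Set.range y) ⊔ Ideal.span {z ^ N} ≤ I' ^ N :=
      sup_le (hJI.trans (Ideal.pow_right_mono hII' N))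
        ((Ideal.span_singleton_le_iff_mem _).2 (Ideal.pow_mem_pow hz N))
    have hfinL (n : ℕ) :
        Module.Finite k (A ⧸ (Ideal.span (Set.range y) ⊔ Ideal.span {z ^ N}) ^ n) :=
      finite_quotient_of_le ((hy n).trans (Ideal.pow_right_mono le_sup_left n))
    exact absurd hle (not_exists_forall_finrank_add_le hN hy hLI' hI hI' hor)

theorem eq_of_forall_isIntegralOverIdeal (hII' : I ≤ I') (hfg : I.FG) (hfg' : I'.FG)
    [Module.Finite k (A ⧸ I)] (h : ∀ z ∈ I', IsIntegralOverIdeal I z)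
    (hI : HasMultiplicity d (fun n ↦ Module.finrank k (A ⧸ I ^ n)) e)
    (hI' : HasMultiplicity d (fun n ↦ Module.finrank k (A ⧸ I' ^ n)) e') : e' = e := by
  have hfin := finite_quotient_pow (k := k) hfg
  have := finite_quotient_of_le (k := k) hII'
  have hfin' := finite_quotient_pow (k := k) hfg'
  obtain ⟨c, hc⟩ := exists_forall_pow_add_le_of_isIntegralOverIdeal hfg' h
  have hshift : HasMultiplicity d (fun n ↦ Module.finrank k (A ⧸ I' ^ (1 * (n + c)))) e' := by
    simpa only [Nat.cast_one, one_pow, one_mul e'] using hI'.comp_mul_add one_pos c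
  refine le_antisymm (hI'.le hI (.of_forall fun n ↦ ?_)) (hI.le hshift (.of_forall fun n ↦ ?_))
  · exact_mod_cast finrank_quotient_le_of_le (k := k) (Ideal.pow_right_mono hII' n)
  · exact_mod_cast finrank_quotient_le_of_le (k := k) ((one_mul (n + c)).symm ▸ hc n)

theorem eq_iff_forall_isIntegralOverIdeal [IsLocalRing A] [IsNoetherianRing A] [IsReduced A]
    [IsAdicComplete (maximalIdeal A) A]
    (hk : Function.Surjective (algebraMap k (ResidueField A)))
    (hA : ∀ P ∈ minimalPrimes A, d ≤ ringKrullDim (A ⧸ P)) (hII' : I ≤ I')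
    (hI : maximalIdeal A ≤ I.radical) (hI' : I' ≤ maximalIdeal A)
    (he : HasMultiplicity d (fun n ↦ (moduleLength A (A ⧸ I ^ n)).toNat) e)
    (he' : HasMultiplicity d (fun n ↦ (moduleLength A (A ⧸ I' ^ n)).toNat) e') :
    e' = e ↔ ∀ z ∈ I', IsIntegralOverIdeal I z := by
  have := finite_quotient_of_maximalIdeal_le_radical hk hI
  simp only [← finrank_eq_toNat_moduleLength hk] at he he'
  refine ⟨?_, fun h ↦ eq_of_forall_isIntegralOverIdeal hII' (IsNoetherian.noetherian I)
    (IsNoetherian.noetherian I') h he he'⟩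
  rintro rfl z hz
  exact isIntegralOverIdeal_of_hasMultiplicity (maximalIdeal A) hA hII' hI'
    (IsNoetherian.noetherian I) he he' hz

end ReesCriterion

end ReesMultiplicity

open ReesMultiplicity IsLocalRing in
theorem rees_multiplicity_criterion_general (F : Type*) [Field F] {A : Type*} [CommRing A]
    [Algebra F A] [IsLocalRing A] [IsNoetherianRing A] [IsReduced A]
    [IsAdicComplete (maximalIdeal A) A] {d : ℕ}
    (hequi : ∀ P ∈ minimalPrimes A, ringKrullDim (A ⧸ P) = d) {I I' : Ideal A} (hII' : I ≤ I')
    (hI : I.radical = maximalIdeal A) (hI' : I'.radical = maximalIdeal A) {eI eI' : ℝ}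
    (heI : HasMultiplicity d (fun n ↦ (moduleLength A (A ⧸ I ^ n)).toNat) eI)
    (heI' : HasMultiplicity d (fun n ↦ (moduleLength A (A ⧸ I' ^ n)).toNat) eI') :
    eI' = eI ↔ ∀ z ∈ I', IsIntegralOverIdeal I z := by
  obtain ⟨g, hg⟩ := exists_residue_section F (A := A)
  let : Algebra (ResidueField A) A := g.toAlgebra
  exact eq_iff_forall_isIntegralOverIdeal (k := ResidueField A) (fun x ↦ ⟨x, hg x⟩)
    (fun P hP ↦ (hequi P hP).ge) hII' hI.ge (hI' ▸ Ideal.le_radical) heI heI'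

/-- **Rees.** For `𝔪`-primary ideals `I ⊆ I'` of a `d`-dimensional complete
equidimensional reduced Noetherian local ring of characteristic `p`, one has
`e(I') = e(I)` if and only if every element of `I'` is integral over `I`. -/
theorem rees_multiplicity_criterion (A : Type*) [CommRing A] [IsLocalRing A]
    [IsNoetherianRing A] [IsReduced A] (p : ℕ) [Fact p.Prime] [CharP A p]
    (hcomp : IsAdicComplete (IsLocalRing.maximalIdeal A) A)
    (d : ℕ) (hd : ringKrullDim A = d)
    (hequi : ∀ P ∈ minimalPrimes A, ringKrullDim (A ⧸ P) = d)
    (I I' : Ideal A) (hII' : I ≤ I')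
    (hI : I.radical = IsLocalRing.maximalIdeal A)
    (hI' : I'.radical = IsLocalRing.maximalIdeal A)
    (eI eI' : ℝ)
    (heI : Filter.Tendsto
      (fun n : ℕ =>
        (d.factorial : ℝ) * ((moduleLength A (A ⧸ I ^ n)).toNat : ℝ) / (n : ℝ) ^ d)
      Filter.atTop (nhds eI))
    (heI' : Filter.Tendsto
      (fun n : ℕ =>
        (d.factorial : ℝ) * ((moduleLength A (A ⧸ I' ^ n)).toNat : ℝ) / (n : ℝ) ^ d)
      Filter.atTop (nhds eI')) :
    eI' = eI ↔ ∀ z ∈ I', IsIntegralOverIdeal I z := by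
  let := ZMod.algebra A p
  exact rees_multiplicity_criterion_general (ZMod p) hequi hII' hI hI' heI heI'
end
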